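/- Let F be a field, R a finite-dimensional F-algebra, and N a finitely generated subgroup of the unit group Rˣ. Then N contains no non-cyclic free subgroup if and only if N satisfies a group identity, i.e., there exist m ≥ 1 and a nonidentity element w of the free group on generators x_1,...,x_m such that w(c_1,...,c_m) = 1 for all c_1,...,c_m ∈ N. -/

import Mathlib

/-!
A free subgroup of rank two contains free subgroups of every finite rank, so it refutes every
identity. For the converse, let `N` act on `R` by multiplication. All matrix entries lie in a
finitely generated ring, so the base field may be taken countable and algebraically closed, and we
induct on the dimension of the representation.

If a finite-index subgroup has an invariant subspace, then the elements acting trivially on the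
subspace and on the quotient commute with each other, so identities for these two representations
combine to one for the whole. Otherwise every finite-index subgroup spans the matrix algebra, and
two cases remain, according to the values of `tr(g) ^ n / det g`. If there are finitely many, then
`N` has finite image in `PGL`, hence a center of finite index modulo the kernel, which gives an
identity. If there are infinitely many, then one of them is large at some place of the finitely
generated ring (Archimedean, `p`-adic, or a field of Laurent series), so the image of `N` in `PGL`
over a local field is unbounded. Some projective limits of its elements are then singular matrices;
those of least rank, moved to general position by elements of `N`, give two elements which play
ping-pong.
-/

namespace TitsAlternative

/-! ### Free groups -/

section FreeGroup

open Function
open scoped commutatorElement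

/-- The translation action of `ℤ` on the free group with basis `ℤ`. -/
def freeGroupShift : Multiplicative ℤ →* MulAut (FreeGroup ℤ) where
  toFun n := FreeGroup.freeGroupCongr (Equiv.addLeft n.toAdd)
  map_one' := by ext x; simp
  map_mul' m n := by
    ext x
    simp [FreeGroup.map.comp, Equiv.Perm.mul_def, comp_def]

theorem freeGroupShift_of (n : Multiplicative ℤ) (i : ℤ) :
    freeGroupShift n (FreeGroup.of i) = FreeGroup.of (n.toAdd + i) := by
  simp [freeGroupShift]

theorem injective_lift_conj_zpow :
    Injective (FreeGroup.lift fun i : ℤ =>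
      (FreeGroup.of 0 ^ i * FreeGroup.of 1 * (FreeGroup.of 0 ^ i)⁻¹ : FreeGroup (Fin 2))) := by
  let toSemidirect : FreeGroup (Fin 2) →* FreeGroup ℤ ⋊[freeGroupShift] Multiplicative ℤ :=
    FreeGroup.lift ![SemidirectProduct.inr (Multiplicative.ofAdd 1),
      SemidirectProduct.inl (FreeGroup.of 0)]
  suffices h : toSemidirect.comp (FreeGroup.lift fun i : ℤ =>
      (FreeGroup.of 0 ^ i * FreeGroup.of 1 * (FreeGroup.of 0 ^ i)⁻¹ : FreeGroup (Fin 2))) =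
        SemidirectProduct.inl by
    have hinj := SemidirectProduct.inl_injective (φ := freeGroupShift)
    rw [← h, MonoidHom.coe_comp] at hinj
    exact hinj.of_comp
  ext i : 1
  calc _ = SemidirectProduct.inr (Multiplicative.ofAdd (1 : ℤ) ^ i) *
          SemidirectProduct.inl (FreeGroup.of 0) *
          SemidirectProduct.inr (Multiplicative.ofAdd (1 : ℤ) ^ i)⁻¹ := by
        simp [toSemidirect]
    _ = SemidirectProduct.inl (FreeGroup.of i) := by
        rw [← SemidirectProduct.inl_aut, freeGroupShift_of]
        simp

theorem exists_injective_freeGroup_fin_two (α : Type*) [Countable α] :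
    ∃ f : FreeGroup α →* FreeGroup (Fin 2), Injective f := by
  obtain ⟨e, he⟩ := exists_injective_nat α
  exact ⟨(FreeGroup.lift _).comp (FreeGroup.map fun a => (e a : ℤ)),
    injective_lift_conj_zpow.comp (FreeGroup.map_injective (Nat.cast_injective.comp he))⟩

theorem injective_lift_unit {G : Type*} [Group G] {g : G} (hg : ¬ IsOfFinOrder g) :
    Injective (FreeGroup.lift fun _ : Unit => g) := by
  refine Injective.of_comp_right (g := FreeGroup.freeGroupUnitEquivInt.symm) ?_
    FreeGroup.freeGroupUnitEquivInt.symm.surjective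
  convert injective_zpow_iff_not_isOfFinOrder.2 hg using 1
  ext n
  simp [FreeGroup.freeGroupUnitEquivInt]

theorem injective_lift_coprodI_of {ι : Type*} [Nontrivial ι] {G : ι → Type*} [∀ i, Group (G i)]
    {g : ∀ i, G i} (hg : ∀ i, ¬ IsOfFinOrder (g i)) :
    Injective (FreeGroup.lift fun i => Monoid.CoprodI.of (g i)) := by
  classical
  let powers (i : ι) : FreeGroup Unit →* Monoid.CoprodI G :=
    Monoid.CoprodI.of.comp (FreeGroup.lift fun _ => g i)
  let wordsFrom (i : ι) : Set (Monoid.CoprodI.Word G) := {w | w.fstIdx = some i}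
  have hinj : Injective (Monoid.CoprodI.lift powers) := by
    have hne (i : ι) : g i ≠ 1 := fun h => hg i (h ▸ IsOfFinOrder.one)
    refine Monoid.CoprodI.lift_injective_of_ping_pong powers (Or.inr ?_) wordsFrom (fun i => ?_)
      (fun i j hij => ?_) (fun i j hij h hh => ?_)
    · obtain ⟨i, -⟩ := exists_pair_ne ι
      exact ⟨i, (Cardinal.natCast_lt_aleph0 (n := 3)).le.trans (Cardinal.aleph0_le_mk _)⟩
    · exact ⟨Monoid.CoprodI.Word.cons (g i) Monoid.CoprodI.Word.empty nofun (hne i),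
        Monoid.CoprodI.Word.fstIdx_cons _ _ _ _⟩
    · exact Set.disjoint_left.2 fun w hi hj => hij (Option.some_injective _ (hi.symm.trans hj))
    · rintro _ ⟨w, hw, rfl⟩
      have hwi : w.fstIdx ≠ some i := fun h => hij (Option.some_injective _ (h.symm.trans hw))
      have hpow : FreeGroup.lift (fun _ => g i) h ≠ 1 :=
        (map_ne_one_iff _ (injective_lift_unit (hg i))).2 hh
      change (Monoid.CoprodI.of (FreeGroup.lift (fun _ => g i) h) • w).fstIdx = some i
      rw [← Monoid.CoprodI.Word.cons_eq_smul (h1 := hwi) (h2 := hpow),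
        Monoid.CoprodI.Word.fstIdx_cons]
  have hcomp : (FreeGroup.lift fun i => Monoid.CoprodI.of (g i)) =
      (Monoid.CoprodI.lift powers).comp freeGroupEquivCoprodI.toMonoidHom := by
    ext i
    simp [powers]
  rw [hcomp]
  exact hinj.comp freeGroupEquivCoprodI.injective

variable {ι α : Type*}

/-- The word `w(u₁, u₂, …)`, each `uᵢ` being written in its own copy of the variables. -/
def substDisjoint (u : ι → FreeGroup α) : FreeGroup ι →* FreeGroup (ι × α) :=
  FreeGroup.lift fun i => FreeGroup.map (Prod.mk i) (u i)

theorem substDisjoint_injective [Nontrivial ι] {u : ι → FreeGroup α} (hu : ∀ i, u i ≠ 1) :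
    Injective (substDisjoint u) := by
  let toFactor (i : ι) : FreeGroup α →* Monoid.CoprodI fun _ : ι => FreeGroup α :=
    Monoid.CoprodI.of (M := fun _ : ι => FreeGroup α) (i := i)
  let split : FreeGroup (ι × α) →* Monoid.CoprodI fun _ : ι => FreeGroup α :=
    FreeGroup.lift fun x => toFactor x.1 (FreeGroup.of x.2)
  have hsplit : split.comp (substDisjoint u) = FreeGroup.lift fun i => toFactor i (u i) := by
    ext i
    have hi : split.comp (FreeGroup.map (Prod.mk i)) = toFactor i := by
      ext; simp [split]
    simpa [substDisjoint] using DFunLike.congr_fun hi (u i)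
  refine Injective.of_comp (f := split) ?_
  rw [← MonoidHom.coe_comp, hsplit]
  exact injective_lift_coprodI_of fun i => not_isOfFinOrder_of_isMulTorsionFree (hu i)

theorem lift_substDisjoint {Γ : Type*} [Group Γ] (u : ι → FreeGroup α) (c : ι × α → Γ)
    (w : FreeGroup ι) :
    FreeGroup.lift c (substDisjoint u w) =
      FreeGroup.lift (fun i => FreeGroup.lift (fun a => c (i, a)) (u i)) w := by
  rw [← MonoidHom.comp_apply]
  congr 1
  ext i
  have hi : (FreeGroup.lift c).comp (FreeGroup.map (Prod.mk i)) =
      FreeGroup.lift fun a => c (i, a) := by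
    ext; simp
  simpa [substDisjoint] using DFunLike.congr_fun hi (u i)

theorem commutator_of_zero_of_one_ne_one :
    ⁅(FreeGroup.of 0 : FreeGroup (Fin 2)), (FreeGroup.of 1 : FreeGroup (Fin 2))⁆ ≠ 1 := by
  decide

end FreeGroup

/-! ### Group identities -/

section Identity

open Function
open scoped commutatorElement

variable {Γ : Type*} [Group Γ]

/-- `Γ` has a free subgroup of rank two. -/
def ContainsFree (Γ : Type*) [Group Γ] : Prop :=
  ∃ f : FreeGroup (Fin 2) →* Γ, Injective f

theorem ContainsFree.of_injective {Δ : Type*} [Group Δ] {f : Δ →* Γ} (hf : Injective f)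
    (h : ContainsFree Δ) : ContainsFree Γ := by
  obtain ⟨φ, hφ⟩ := h
  exact ⟨f.comp φ, hf.comp hφ⟩

theorem ContainsFree.exists_lift_ne_one (h : ContainsFree Γ) {α : Type*} [Countable α]
    {w : FreeGroup α} (hw : w ≠ 1) : ∃ c : α → Γ, FreeGroup.lift c w ≠ 1 := by
  obtain ⟨f, hf⟩ := h
  obtain ⟨e, he⟩ := exists_injective_freeGroup_fin_two α
  refine ⟨fun a => f (e (FreeGroup.of a)), ?_⟩
  have hlift : FreeGroup.lift (fun a => f (e (FreeGroup.of a))) = f.comp e := by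
    ext; simp
  rw [hlift]
  exact (map_ne_one_iff (f.comp e) (hf.comp he)).2 hw

/-- `Γ` satisfies a group identity modulo the subgroup `N`. Two variables are enough, since every
free group of countable rank embeds in the one of rank two. -/
def HasIdentityMod (N : Subgroup Γ) : Prop :=
  ∃ w : FreeGroup (Fin 2), w ≠ 1 ∧ ∀ c : Fin 2 → Γ, FreeGroup.lift c w ∈ N

namespace HasIdentityMod

variable {N N₁ N₂ H : Subgroup Γ}

theorem of_countable {α : Type*} [Countable α] {w : FreeGroup α} (hw : w ≠ 1)
    (h : ∀ c : α → Γ, FreeGroup.lift c w ∈ N) : HasIdentityMod N := by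
  obtain ⟨f, hf⟩ := exists_injective_freeGroup_fin_two α
  refine ⟨f w, (map_ne_one_iff f hf).2 hw, fun c => ?_⟩
  have hlift : (FreeGroup.lift c).comp f =
      FreeGroup.lift fun a => FreeGroup.lift c (f (.of a)) := by
    ext; simp
  rw [← MonoidHom.comp_apply, hlift]
  exact h _

theorem mono (h : HasIdentityMod N₁) (hle : N₁ ≤ N₂) : HasIdentityMod N₂ := by
  obtain ⟨w, hw, hwN⟩ := h
  exact ⟨w, hw, fun c => hle (hwN c)⟩

theorem of_subst {u : Fin 2 → FreeGroup (Fin 2)} (hu : ∀ i, u i ≠ 1) {w : FreeGroup (Fin 2)}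
    (hw : w ≠ 1)
    (h : ∀ c : Fin 2 → Fin 2 → Γ, FreeGroup.lift (fun i => FreeGroup.lift (c i) (u i)) w ∈ N) :
    HasIdentityMod N := by
  refine of_countable ((map_ne_one_iff _ (substDisjoint_injective hu)).2 hw) fun c => ?_
  rw [lift_substDisjoint]
  exact h fun i j => c (i, j)

theorem commutator (h₁ : HasIdentityMod N₁) (h₂ : HasIdentityMod N₂) :
    HasIdentityMod ⁅N₁, N₂⁆ := by
  obtain ⟨u, hu, huN⟩ := h₁
  obtain ⟨v, hv, hvN⟩ := h₂
  refine of_subst (u := ![u, v]) (Fin.forall_fin_two.2 ⟨hu, hv⟩)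
    commutator_of_zero_of_one_ne_one fun c => ?_
  simpa using Subgroup.commutator_mem_commutator (huN (c 0)) (hvN (c 1))

theorem inf [N₁.Normal] [N₂.Normal] (h₁ : HasIdentityMod N₁) (h₂ : HasIdentityMod N₂) :
    HasIdentityMod (N₁ ⊓ N₂) :=
  (h₁.commutator h₂).mono (Subgroup.commutator_le_inf N₁ N₂)

theorem trans (hH : HasIdentityMod H) (hN : HasIdentityMod (N.subgroupOf H)) :
    HasIdentityMod N := by
  obtain ⟨u, hu, huH⟩ := hH
  obtain ⟨w, hw, hwN⟩ := hN
  refine of_subst (fun _ => hu) hw fun c => ?_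
  have hmem := Subgroup.mem_subgroupOf.1 (hwN fun i => ⟨FreeGroup.lift (c i) u, huH (c i)⟩)
  rw [← H.subtype_apply, ← MonoidHom.comp_apply] at hmem
  convert hmem using 2
  ext; simp

theorem of_finiteIndex (H : Subgroup Γ) [H.FiniteIndex] : HasIdentityMod H := by
  refine of_countable (α := Unit) (w := FreeGroup.of () ^ H.normalCore.index) ?_ fun c => ?_
  · exact (pow_eq_one_iff_left H.normalCore.index_ne_zero_of_finite).not.2 (FreeGroup.of_ne_one ())
  · rw [map_pow]
    exact H.normalCore_le (H.normalCore.pow_index_mem _)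

end HasIdentityMod

end Identity

/-! ### General position -/

section GeneralPosition

open Pointwise

theorem finiteIndex_stabilizer_of_mem_minimalPrimes (Γ : Type*) {A : Type*} [Group Γ] [CommRing A]
    [IsNoetherianRing A] [MulSemiringAction Γ A] {p : Ideal A} (hp : p ∈ minimalPrimes A) :
    (MulAction.stabilizer Γ p).FiniteIndex := by
  have hsmul (g : Γ) : g • p ∈ minimalPrimes A := by
    refine ⟨⟨(Ideal.IsPrime.smul_iff g).2 hp.1.1, bot_le⟩, fun q hq hle => ?_⟩
    exact Ideal.pointwise_smul_subset_iff.2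
      (hp.2 ⟨(Ideal.IsPrime.smul_iff g⁻¹).2 hq.1, bot_le⟩ (Ideal.subset_pointwise_smul_iff.1 hle))
  have : Finite (MulAction.orbit Γ p) :=
    (minimalPrimes.finite_of_isNoetherianRing A).subset (Set.range_subset_iff.2 hsmul)
  have : Finite (Γ ⧸ MulAction.stabilizer Γ p) :=
    .of_equiv _ (MulAction.orbitEquivQuotientStabilizer Γ p)
  exact Subgroup.finiteIndex_of_finite_quotient

variable {Γ L : Type*} [Group Γ] [Field L]

/-- `Γ` acts on a right-translation invariant algebra of functions on `Γ`. -/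
abbrev rightTranslationAction (A : Subalgebra L (Γ → L))
    (hA : ∀ f ∈ A, ∀ g : Γ, (fun h => f (h * g)) ∈ A) : MulSemiringAction Γ A where
  smul g f := ⟨fun h => f.1 (h * g), hA f.1 f.2 g⟩
  one_smul f := Subtype.ext (funext fun h => congrArg f.1 (mul_one h))
  mul_smul a b f := Subtype.ext (funext fun h => congrArg f.1 (mul_assoc h a b).symm)
  smul_zero _ := rfl
  smul_add _ _ _ := rfl
  smul_one _ := rfl
  smul_mul _ _ _ := rfl

-- A minimal prime below the functions vanishing at `1` is preserved by a finite-index subgroup,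
-- so a function in it vanishes on that subgroup.
theorem exists_forall_ne_zero_of_forall_finiteIndex {A : Subalgebra L (Γ → L)} (hfg : A.FG)
    (hA : ∀ f ∈ A, ∀ g : Γ, (fun h => f (h * g)) ∈ A) {κ : Type*} [Finite κ] {f : κ → Γ → L}
    (hf : ∀ k, f k ∈ A)
    (hne : ∀ k, ∀ H : Subgroup Γ, H.FiniteIndex → ∃ h ∈ H, f k h ≠ 0) :
    ∃ h, ∀ k, f k h ≠ 0 := by
  cases nonempty_fintype κ
  by_contra! hvanish
  let _ : MulSemiringAction Γ A := rightTranslationAction A hA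
  have : Algebra.FiniteType L A := A.fg_iff_finiteType.1 hfg
  have : IsNoetherianRing A := Algebra.FiniteType.isNoetherianRing L A
  let eval (h : Γ) : A →+* L := (Pi.evalRingHom (fun _ => L) h).comp A.val.toRingHom
  have : (RingHom.ker (eval 1)).IsPrime := RingHom.ker_isPrime _
  obtain ⟨p, hp, hple⟩ :=
    Ideal.exists_minimalPrimes_le (bot_le : (⊥ : Ideal A) ≤ RingHom.ker (eval 1))
  have hprod : ∏ k, (⟨f k, hf k⟩ : A) = 0 := by
    ext h
    obtain ⟨k, hk⟩ := hvanish h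
    exact (map_prod (eval h) _ _).trans (Finset.prod_eq_zero (Finset.mem_univ k) hk)
  obtain ⟨k, -, hk⟩ := hp.1.1.prod_mem_iff.1 (hprod ▸ p.zero_mem)
  obtain ⟨h, hh, hkh⟩ := hne k _ (finiteIndex_stabilizer_of_mem_minimalPrimes Γ hp)
  have hstab : h • p = p := hh
  have hmem : h • (⟨f k, hf k⟩ : A) ∈ p := hstab ▸ Ideal.smul_mem_pointwise_smul h _ p hk
  have hzero : f k (1 * h) = 0 := hple hmem
  exact hkh (one_mul h ▸ hzero)

variable {R : Type*} [Ring R] [Algebra L R]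

/-- Functions on `Γ` linear in `ρ h` or in `ρ h⁻¹`. -/
def linearCoefficients (L : Type*) [Field L] [Algebra L R] (ρ : Γ →* R) : Submodule L (Γ → L) :=
  LinearMap.range (LinearMap.pi fun h => LinearMap.applyₗ (R := L) (M₂ := L) (ρ h)) ⊔
    LinearMap.range (LinearMap.pi fun h => LinearMap.applyₗ (R := L) (M₂ := L) (ρ h⁻¹))

theorem apply_mem_linearCoefficients (ρ : Γ →* R) (φ : R →ₗ[L] L) :
    (fun h => φ (ρ h)) ∈ linearCoefficients L ρ :=
  Submodule.mem_sup_left ⟨φ, rfl⟩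

theorem apply_inv_mem_linearCoefficients (ρ : Γ →* R) (φ : R →ₗ[L] L) :
    (fun h => φ (ρ h⁻¹)) ∈ linearCoefficients L ρ :=
  Submodule.mem_sup_right ⟨φ, rfl⟩

theorem comp_mul_right_mem_linearCoefficients {ρ : Γ →* R} {f : Γ → L}
    (hf : f ∈ linearCoefficients L ρ) (g : Γ) : (fun h => f (h * g)) ∈ linearCoefficients L ρ := by
  obtain ⟨_, ⟨φ, rfl⟩, _, ⟨ψ, rfl⟩, rfl⟩ := Submodule.mem_sup.1 hf
  convert add_mem
    (apply_mem_linearCoefficients ρ (φ ∘ₗ LinearMap.mulRight L (ρ g)))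
    (apply_inv_mem_linearCoefficients ρ (ψ ∘ₗ LinearMap.mulLeft L (ρ g⁻¹))) using 1
  ext h
  simp

theorem comp_mul_right_mem_adjoin_linearCoefficients {ρ : Γ →* R} {f : Γ → L}
    (hf : f ∈ Algebra.adjoin L (linearCoefficients L ρ : Set (Γ → L))) (g : Γ) :
    (fun h => f (h * g)) ∈ Algebra.adjoin L (linearCoefficients L ρ : Set (Γ → L)) := by
  induction hf using Algebra.adjoin_induction with
  | mem f hf => exact Algebra.subset_adjoin (comp_mul_right_mem_linearCoefficients hf g)
  | algebraMap r => exact Subalgebra.algebraMap_mem _ r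
  | add _ _ _ _ hf₁ hf₂ => exact add_mem hf₁ hf₂
  | mul _ _ _ _ hf₁ hf₂ => exact mul_mem hf₁ hf₂

variable [FiniteDimensional L R]

theorem fg_adjoin_linearCoefficients (ρ : Γ →* R) :
    (Algebra.adjoin L (linearCoefficients L ρ : Set (Γ → L))).FG := by
  obtain ⟨s, hs⟩ : (linearCoefficients L ρ).FG :=
    .sup .of_finite .of_finite
  exact ⟨s, by rw [← hs, Algebra.adjoin_span]⟩

/-- Every finite-index subgroup spans the whole algebra. For matrices this is absolute
irreducibility of the restriction to each finite-index subgroup, by Burnside's theorem. -/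
def IsStronglySpanning (L : Type*) [Field L] [Algebra L R] (ρ : Γ →* R) : Prop :=
  ∀ H : Subgroup Γ, H.FiniteIndex → Submodule.span L (ρ '' H) = ⊤

theorem IsStronglySpanning.exists_forall_apply_ne_zero {ρ : Γ →* R}
    (hρ : IsStronglySpanning L ρ) {κ : Type*} [Finite κ] {φ : κ → R →ₗ[L] L}
    (hφ : ∀ k, φ k ≠ 0) : ∃ h : Γ, ∀ k, φ k (ρ h) ≠ 0 ∧ φ k (ρ h⁻¹) ≠ 0 := by
  have hne (k : κ) (H : Subgroup Γ) (hH : H.FiniteIndex) : ∃ h ∈ H, φ k (ρ h) ≠ 0 := by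
    by_contra! hzero
    exact hφ k (LinearMap.ext_on (hρ H hH) (Set.forall_mem_image.2 hzero))
  obtain ⟨h, hh⟩ := exists_forall_ne_zero_of_forall_finiteIndex (κ := κ ⊕ κ)
    (f := Sum.elim (fun k h => φ k (ρ h)) fun k h => φ k (ρ h⁻¹))
    (fg_adjoin_linearCoefficients ρ)
    (fun _ hf g => comp_mul_right_mem_adjoin_linearCoefficients hf g)
    (Sum.forall.2 ⟨fun k => Algebra.subset_adjoin (apply_mem_linearCoefficients ρ (φ k)),
      fun k => Algebra.subset_adjoin (apply_inv_mem_linearCoefficients ρ (φ k))⟩)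
    (Sum.forall.2 ⟨hne, fun k H hH => by
      obtain ⟨h, hh, hne⟩ := hne k H hH
      exact ⟨h⁻¹, H.inv_mem hh, by simpa using hne⟩⟩)
  exact ⟨h, fun k => ⟨hh (Sum.inl k), hh (Sum.inr k)⟩⟩

theorem IsStronglySpanning.exists_forall_mul_mul_ne_zero {ι : Type*} [Fintype ι] [DecidableEq ι]
    {ρ : Γ →* Matrix ι ι L} (hρ : IsStronglySpanning L ρ) {κ : Type*} [Finite κ]
    {A B : κ → Matrix ι ι L} (hA : ∀ k, A k ≠ 0) (hB : ∀ k, B k ≠ 0) :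
    ∃ h : Γ, ∀ k, A k * ρ h * B k ≠ 0 ∧ A k * ρ h⁻¹ * B k ≠ 0 := by
  have hentry (k : κ) : ∃ i i', A k i i' ≠ 0 := by
    by_contra! h
    exact hA k (Matrix.ext h)
  have hentry' (k : κ) : ∃ j' j, B k j' j ≠ 0 := by
    by_contra! h
    exact hB k (Matrix.ext h)
  choose i i' hii' using hentry
  choose j' j hjj' using hentry'
  let φ (k : κ) : Matrix ι ι L →ₗ[L] L := Matrix.entryLinearMap L L (i k) (j k) ∘ₗ
    LinearMap.mulRight L (B k) ∘ₗ LinearMap.mulLeft L (A k)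
  have hφ (k : κ) : φ k ≠ 0 := by
    intro h
    have happly : φ k (Matrix.single (i' k) (j' k) 1) = A k (i k) (i' k) * B k (j' k) (j k) := by
      simp [φ, Matrix.mul_apply, Matrix.single_apply, ite_and]
    exact mul_ne_zero (hii' k) (hjj' k) (by rw [← happly, h, LinearMap.zero_apply])
  obtain ⟨h, hh⟩ := hρ.exists_forall_apply_ne_zero hφ
  exact ⟨h, fun k => ⟨fun h0 => (hh k).1 (by simp [φ, h0]), fun h0 => (hh k).2 (by simp [φ, h0])⟩⟩

end GeneralPosition

/-! ### Ping-pong on cones -/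

section PingPong

variable {Γ : Type*} [Group Γ]

/-- The letter `g` or `g⁻¹`, with the sign convention of `FreeGroup`. -/
def letter (g : Γ) (b : Bool) : Γ :=
  bif b then g else g⁻¹

theorem letter_conj (h g : Γ) (b : Bool) :
    letter (h * g * h⁻¹) b = h * letter g b * h⁻¹ := by
  cases b
  · simp [letter, mul_assoc]
  · rfl

theorem lift_mk_cons {ι : Type*} (a : ι → Γ) (s : ι × Bool) (w : List (ι × Bool)) :
    FreeGroup.lift a (FreeGroup.mk (s :: w)) =
      letter (a s.1) s.2 * FreeGroup.lift a (FreeGroup.mk w) := by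
  simp [letter, FreeGroup.lift_mk]

-- Unlike in `FreeGroup.injective_lift_of_ping_pong`, a letter `s` only has to be contracting on
-- `D s`, not on the complement of the target of the inverse letter.
theorem injective_lift_of_ping_pong {X ι : Type*} [MulAction Γ X] (a : ι → Γ)
    (U D : ι × Bool → Set X) (hDU : ∀ s, ∀ x ∈ D s, letter (a s.1) s.2 • x ∈ U s)
    (hUD : ∀ s t : ι × Bool, (s.1 = t.1 → s.2 = t.2) → U t ⊆ D s)
    {p : X} (hpD : ∀ s, p ∈ D s) (hpU : ∀ s, p ∉ U s) :
    Function.Injective (FreeGroup.lift a) := by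
  classical
  have hreduced (w : List (ι × Bool)) (s : ι × Bool) (hw : FreeGroup.IsReduced (s :: w)) :
      FreeGroup.lift a (FreeGroup.mk (s :: w)) • p ∈ U s := by
    induction w generalizing s with
    | nil =>
      rw [lift_mk_cons, ← FreeGroup.one_eq_mk, map_one, mul_one]
      exact hDU s p (hpD s)
    | cons t w ih =>
      obtain ⟨hst, htw⟩ := List.isChain_cons_cons.1 hw
      rw [lift_mk_cons, mul_smul]
      exact hDU s _ (hUD s t hst (ih t htw))
  refine (injective_iff_map_eq_one _).2 fun w hw => ?_
  by_contra hne
  obtain ⟨s, l, hsl⟩ := List.exists_cons_of_ne_nil (FreeGroup.toWord_eq_nil_iff.not.2 hne)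
  have hmem := hreduced l s (hsl ▸ FreeGroup.isReduced_toWord)
  rw [← hsl, FreeGroup.mk_toWord, hw, one_smul] at hmem
  exact hpU s hmem

end PingPong

section Cones

open Filter Matrix Topology

attribute [local instance] Matrix.normedAddCommGroup Matrix.normedSpace

variable {ι L : Type*} [Fintype ι]

section NormedField

variable [NormedField L]

/-- Vectors near the range of `Z`, with a tolerance decreasing in the parameter `C`. -/
def attractingCone (Z : Matrix ι ι L) (C : ℝ) : Set (ι → L) :=
  {v | v ≠ 0 ∧ ∃ u, 4 * C ^ 2 * ‖v - Z *ᵥ u‖ ≤ ‖v‖}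

/-- Vectors away from the kernel of `Z`, with a margin decreasing in the parameter `C`. -/
def expandingCone (Z : Matrix ι ι L) (C : ℝ) : Set (ι → L) :=
  {v | v ≠ 0 ∧ ‖v‖ ≤ 2 * C * ‖Z *ᵥ v‖}

variable {A Z X Y : Matrix ι ι L} {C η : ℝ} {v : ι → L}

theorem smul_mem_attractingCone {c : L} (hc : c ≠ 0) (hv : v ∈ attractingCone Z C) :
    c • v ∈ attractingCone Z C := by
  obtain ⟨hv, u, hu⟩ := hv
  refine ⟨smul_ne_zero hc hv, c • u, ?_⟩
  rw [mulVec_smul, ← smul_sub, norm_smul, norm_smul, mul_left_comm]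
  gcongr

theorem mulVec_mem_attractingCone (hC : 1 ≤ C) (hη : 16 * C ^ 3 * η ≤ 1)
    (hA : ‖A *ᵥ v - Z *ᵥ v‖ ≤ η * ‖v‖) (hv : v ∈ expandingCone Z C) :
    A *ᵥ v ∈ attractingCone Z C := by
  obtain ⟨hv, hZv⟩ := hv
  have hvpos : 0 < ‖v‖ := norm_pos_iff.2 hv
  have hsmall : 16 * C ^ 3 * ‖A *ᵥ v - Z *ᵥ v‖ ≤ ‖v‖ := by
    calc 16 * C ^ 3 * ‖A *ᵥ v - Z *ᵥ v‖ ≤ 16 * C ^ 3 * (η * ‖v‖) := by gcongr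
      _ = 16 * C ^ 3 * η * ‖v‖ := by ring
      _ ≤ ‖v‖ := mul_le_of_le_one_left hvpos.le hη
  have hlarge : ‖v‖ ≤ 2 * C * ‖A *ᵥ v‖ + 2 * C * ‖A *ᵥ v - Z *ᵥ v‖ := by
    rw [← mul_add]
    exact hZv.trans (by gcongr; exact norm_le_norm_add_norm_sub _ _)
  have hcube : 2 * C * ‖A *ᵥ v - Z *ᵥ v‖ ≤ 2 * C ^ 3 * ‖A *ᵥ v - Z *ᵥ v‖ := by
    gcongr
    exact le_self_pow₀ hC three_ne_zero
  have hdist : 4 * C ^ 2 * ‖A *ᵥ v - Z *ᵥ v‖ ≤ ‖A *ᵥ v‖ := by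
    refine le_of_mul_le_mul_left ?_ (by positivity : 0 < 2 * C)
    linarith
  refine ⟨fun h => ?_, v, hdist⟩
  have hzero : ‖A *ᵥ v‖ = 0 := norm_eq_zero.2 h
  nlinarith

theorem attractingCone_subset_expandingCone (hC : 1 ≤ C) (hX : ∀ u, ‖X *ᵥ u‖ ≤ C * ‖u‖)
    (hXY : ∀ u, ‖Y *ᵥ u‖ ≤ C * ‖X *ᵥ (Y *ᵥ u)‖) :
    attractingCone Y C ⊆ expandingCone X C := by
  rintro v ⟨hv, u, hu⟩
  refine ⟨hv, ?_⟩
  have hnear : 4 * ‖v - Y *ᵥ u‖ ≤ ‖v‖ := by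
    refine le_trans ?_ hu
    gcongr
    nlinarith
  have hv_le : ‖v‖ ≤ ‖Y *ᵥ u‖ + ‖v - Y *ᵥ u‖ := by
    rw [add_comm]
    exact norm_le_norm_sub_add v _
  have hXu : C * ‖X *ᵥ (Y *ᵥ u)‖ ≤ C * ‖X *ᵥ v‖ + C ^ 2 * ‖v - Y *ᵥ u‖ := by
    have htri : ‖X *ᵥ (Y *ᵥ u)‖ ≤ ‖X *ᵥ v‖ + ‖X *ᵥ (v - Y *ᵥ u)‖ := by
      rw [mulVec_sub]
      exact norm_le_norm_add_norm_sub _ _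
    calc C * ‖X *ᵥ (Y *ᵥ u)‖ ≤ C * (‖X *ᵥ v‖ + C * ‖v - Y *ᵥ u‖) := by
          gcongr
          exact htri.trans (by gcongr; exact hX _)
      _ = _ := by ring
  linarith [hXY u]

theorem norm_mulVec_le (A : Matrix ι ι L) (v : ι → L) :
    ‖A *ᵥ v‖ ≤ Fintype.card ι * ‖A‖ * ‖v‖ := by
  refine (pi_norm_le_iff_of_nonneg (by positivity)).2 fun i => ?_
  calc ‖(A *ᵥ v) i‖ ≤ ∑ j, ‖A i j * v j‖ := norm_sum_le _ _
    _ ≤ ∑ _j : ι, ‖A‖ * ‖v‖ := by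
        gcongr with j
        rw [norm_mul]
        gcongr
        · exact A.norm_entry_le_entrywise_sup_norm
        · exact norm_le_pi_norm v j
    _ = Fintype.card ι * ‖A‖ * ‖v‖ := by simp [mul_assoc]

theorem eventually_norm_mulVec_sub_le {α : Type*} {l : Filter α} {A : α → Matrix ι ι L}
    (hA : Tendsto A l (𝓝 Z)) (hη : 0 < η) :
    ∀ᶠ k in l, ∀ v, ‖A k *ᵥ v - Z *ᵥ v‖ ≤ η * ‖v‖ := by
  have hlim : Tendsto (fun k => Fintype.card ι * ‖A k - Z‖) l (𝓝 0) := by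
    simpa using (tendsto_iff_norm_sub_tendsto_zero.1 hA).const_mul (Fintype.card ι : ℝ)
  filter_upwards [hlim.eventually_le_const hη] with k hk v
  rw [← sub_mulVec]
  exact (norm_mulVec_le _ v).trans (by gcongr)

theorem eventually_norm_mulVec_le (A : Matrix ι ι L) :
    ∀ᶠ C : ℝ in atTop, ∀ v, ‖A *ᵥ v‖ ≤ C * ‖v‖ := by
  filter_upwards [eventually_ge_atTop (Fintype.card ι * ‖A‖)] with C hC v
  exact (norm_mulVec_le A v).trans (by gcongr)

theorem exists_forall_mulVec_ne_zero_and_notMem_range [Infinite L] [DecidableEq ι] {κ : Type*}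
    [Finite κ] {Z : κ → Matrix ι ι L} (hne : ∀ s, Z s ≠ 0) (hdet : ∀ s, (Z s).det = 0) :
    ∃ p : ι → L, ∀ s, Z s *ᵥ p ≠ 0 ∧ p ∉ LinearMap.range (Z s).mulVecLin := by
  classical
  cases nonempty_fintype κ
  have hker (s : κ) : LinearMap.ker (Z s).mulVecLin ≠ ⊤ := fun h =>
    hne s (toLin'.map_eq_zero_iff.1 (LinearMap.ker_eq_top.1 h))
  have hrange (s : κ) : LinearMap.range (Z s).mulVecLin ≠ ⊤ := fun h => by
    have hunit := mulVec_surjective_iff_isUnit.1 (LinearMap.range_eq_top.1 h)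
    rw [isUnit_iff_isUnit_det, hdet s] at hunit
    exact not_isUnit_zero hunit
  let subspaces : Finset (Submodule L (ι → L)) :=
    Finset.univ.image (fun s => LinearMap.ker (Z s).mulVecLin) ∪
      Finset.univ.image fun s => LinearMap.range (Z s).mulVecLin
  obtain ⟨p, hp⟩ := (Set.ne_univ_iff_exists_notMem _).1 <|
    Subspace.biUnion_ne_univ_of_top_notMem (s := subspaces) (by simp [subspaces, hker, hrange])
  simp only [Set.mem_iUnion, not_exists] at hp
  exact ⟨p, fun s => ⟨
    fun h => hp (LinearMap.ker (Z s).mulVecLin) (by simp [subspaces]) (LinearMap.mem_ker.2 h),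
    hp _ (by simp [subspaces])⟩⟩

end NormedField

variable [NontriviallyNormedField L] [CompleteSpace L]

theorem eventually_norm_mulVec_le_of_rank_le {X Y : Matrix ι ι L} (h : Y.rank ≤ (X * Y).rank) :
    ∀ᶠ C : ℝ in atTop, ∀ u, ‖Y *ᵥ u‖ ≤ C * ‖X *ᵥ (Y *ᵥ u)‖ := by
  let f := X.mulVecLin.domRestrict (LinearMap.range Y.mulVecLin)
  have hker : LinearMap.ker f = ⊥ := by
    have hrange : LinearMap.range f = LinearMap.range (X * Y).mulVecLin := by
      rw [LinearMap.range_domRestrict, ← LinearMap.range_comp, mulVecLin_mul]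
    have hdim := f.finrank_range_add_finrank_ker
    rw [hrange] at hdim
    rw [← Submodule.finrank_eq_zero]
    simp only [rank] at h
    lia
  obtain ⟨K, -, hK⟩ := f.exists_antilipschitzWith hker
  filter_upwards [eventually_ge_atTop (K : ℝ)] with C hC u
  let y : LinearMap.range Y.mulVecLin := ⟨Y *ᵥ u, u, rfl⟩
  exact (hK.le_mul_norm (map_zero f) y).trans (mul_le_mul_of_nonneg_right hC (norm_nonneg (f y)))

theorem eventually_norm_le_norm_sub_of_notMem {V : Type*} [NormedAddCommGroup V] [NormedSpace L V]
    {S : Submodule L V} [FiniteDimensional L S] {p : V} (hp : p ∉ S) :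
    ∀ᶠ C : ℝ in atTop, ∀ x ∈ S, ‖p‖ ≤ C * ‖p - x‖ := by
  have hpos : 0 < Metric.infDist p S :=
    (S.closed_of_finiteDimensional.notMem_iff_infDist_pos S.nonempty).1 hp
  filter_upwards [eventually_ge_atTop (‖p‖ / Metric.infDist p S)] with C hC x hx
  calc ‖p‖ = ‖p‖ / Metric.infDist p S * Metric.infDist p S := by field_simp
    _ ≤ C * ‖p - x‖ := by
        rw [← dist_eq_norm]
        gcongr
        · exact hC.trans' (by positivity)
        · exact Metric.infDist_le_dist_of_mem hx

variable [DecidableEq ι] {Γ : Type*} [Group Γ]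

theorem exists_eventually_mem_expandingCone_notMem_attractingCone {κ : Type*} [Finite κ]
    {Z : κ → Matrix ι ι L} (hne : ∀ s, Z s ≠ 0) (hdet : ∀ s, (Z s).det = 0) :
    ∃ p : ι → L, ∀ᶠ C : ℝ in atTop,
      ∀ s, p ∈ expandingCone (Z s) C ∧ p ∉ attractingCone (Z s) C := by
  obtain ⟨p, hp⟩ := exists_forall_mulVec_ne_zero_and_notMem_range hne hdet
  refine ⟨p, eventually_all.2 fun s => ?_⟩
  obtain ⟨hZp, hp_range⟩ := hp s
  have hp0 : p ≠ 0 := fun h => hZp (by rw [h, mulVec_zero])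
  have hexp : ∀ᶠ C : ℝ in atTop, ‖p‖ ≤ 2 * C * ‖Z s *ᵥ p‖ :=
    ((tendsto_id.const_mul_atTop two_pos).atTop_mul_const
      (norm_pos_iff.2 hZp)).eventually_ge_atTop _
  filter_upwards [hexp, eventually_norm_le_norm_sub_of_notMem hp_range, eventually_ge_atTop 1]
    with C hexp hattr hC
  refine ⟨⟨hp0, hexp⟩, ?_⟩
  rintro ⟨-, u, hu⟩
  have hfar : ‖p‖ ≤ C * ‖p - Z s *ᵥ u‖ := hattr _ ⟨u, rfl⟩
  have hpos : 0 < ‖p‖ := norm_pos_iff.2 hp0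
  have hsq : C * ‖p - Z s *ᵥ u‖ ≤ C ^ 2 * ‖p - Z s *ᵥ u‖ := by
    gcongr
    exact le_self_pow₀ hC two_ne_zero
  linarith

theorem containsFree_of_tendsto {ρ : Γ →* Matrix ι ι L} {z : Fin 2 → ℕ → Γ}
    {e : Fin 2 × Bool → ℕ → L} (he : ∀ s k, e s k ≠ 0) {Z : Fin 2 × Bool → Matrix ι ι L}
    (hlim : ∀ s, Tendsto (fun k => e s k • ρ (letter (z s.1 k) s.2)) atTop (𝓝 (Z s)))
    (hne : ∀ s, Z s ≠ 0) (hdet : ∀ s, (Z s).det = 0)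
    (hrank : ∀ s t : Fin 2 × Bool, (s.1 = t.1 → s.2 = t.2) → (Z t).rank ≤ (Z s * Z t).rank) :
    ContainsFree Γ := by
  obtain ⟨p, hp⟩ := exists_eventually_mem_expandingCone_notMem_attractingCone hne hdet
  have hsub : ∀ᶠ C : ℝ in atTop, ∀ s t : Fin 2 × Bool, (s.1 = t.1 → s.2 = t.2) →
      ∀ u, ‖Z t *ᵥ u‖ ≤ C * ‖Z s *ᵥ (Z t *ᵥ u)‖ :=
    eventually_all.2 fun s => eventually_all.2 fun t => eventually_imp_distrib_left.2 fun hst =>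
      eventually_norm_mulVec_le_of_rank_le (hrank s t hst)
  have hbound : ∀ᶠ C : ℝ in atTop, ∀ s u, ‖Z s *ᵥ u‖ ≤ C * ‖u‖ :=
    eventually_all.2 fun s => eventually_norm_mulVec_le (Z s)
  obtain ⟨C, hpC, hCsub, hCbound, hC⟩ :=
    (hp.and (hsub.and (hbound.and (eventually_ge_atTop 1)))).exists
  have : 0 < C := by linarith
  have hη : 16 * C ^ 3 * (16 * C ^ 3)⁻¹ ≤ 1 := mul_inv_le_one
  obtain ⟨k, hk⟩ := (eventually_all.2 fun s => eventually_norm_mulVec_sub_le (hlim s)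
    (by positivity : 0 < (16 * C ^ 3)⁻¹)).exists
  let : MulAction Γ (ι → L) :=
    MulAction.compHom (ι → L) ((Matrix.toLinAlgEquiv' : _ ≃ₐ[L] _).toMonoidHom.comp ρ)
  have hsmul (g : Γ) (v : ι → L) : g • v = ρ g *ᵥ v := rfl
  refine ⟨_, injective_lift_of_ping_pong (fun i => z i k) (fun s => attractingCone (Z s) C)
    (fun s => expandingCone (Z s) C) (fun s v hv => ?_)
    (fun s t hst => attractingCone_subset_expandingCone hC (hCbound s) (hCsub s t hst))
    (fun s => (hpC s).1) fun s => (hpC s).2⟩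
  have hmem := smul_mem_attractingCone (inv_ne_zero (he s k))
    (mulVec_mem_attractingCone hC hη (hk s v) hv)
  rwa [smul_mulVec, inv_smul_smul₀ (he s k), ← hsmul] at hmem

end Cones

/-! ### Proximal limits -/

section ProximalLimits

open Filter Matrix Topology

theorem exists_tendsto_smul_subseq {L E : Type*} [NontriviallyNormedField L]
    [NormedAddCommGroup E] [NormedSpace L E] [ProperSpace E] {x : ℕ → E} (hx : ∀ k, x k ≠ 0) :
    ∃ (c : ℕ → L) (φ : ℕ → ℕ) (y : E), (∀ k, c k ≠ 0) ∧ (∀ k, ‖c k • x k‖ ≤ 1) ∧ StrictMono φ ∧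
      y ≠ 0 ∧ Tendsto (fun k => c (φ k) • x (φ k)) atTop (𝓝 y) := by
  obtain ⟨r, hr⟩ := NormedField.exists_one_lt_norm L
  choose c hc hlt hge _ using fun k => rescale_to_shell hr one_pos (hx k)
  obtain ⟨y, -, φ, hφ, hlim⟩ := (isCompact_closedBall (0 : E) 1).tendsto_subseq
    (x := fun k => c k • x k) fun k => mem_closedBall_zero_iff.2 (hlt k).le
  refine ⟨c, φ, y, hc, fun k => (hlt k).le, hφ, ?_, hlim⟩
  have hynorm : 1 / ‖r‖ ≤ ‖y‖ := ge_of_tendsto' hlim.norm fun k => hge (φ k)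
  exact norm_pos_iff.1 (lt_of_lt_of_le (by positivity) hynorm)

section Representation

attribute [local instance] Matrix.normedAddCommGroup Matrix.normedSpace

variable {Γ ι L : Type*} [Group Γ] [Fintype ι] [DecidableEq ι]

section NormedField

variable [NormedField L]

/-- The image of the representation in `PGL` is unbounded: `‖ρ g‖ ^ n / ‖det (ρ g)‖`, which does not
change when `ρ g` is multiplied by a scalar, takes arbitrarily large values. -/
def IsProjectivelyUnbounded (ρ : Γ →* Matrix ι ι L) : Prop :=
  ∀ B : ℝ, ∃ g, B * ‖(ρ g).det‖ < ‖ρ g‖ ^ Fintype.card ι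

/-- The limits of scalar multiples of the operators `ρ g`. Its nonzero elements are the
quasi-projective transformations which are limits of the projective action of the group. -/
def projectiveClosure (ρ : Γ →* Matrix ι ι L) : Submonoid (Matrix ι ι L) :=
  Submonoid.topologicalClosure
    { carrier := {M | ∃ c : L, c ≠ 0 ∧ ∃ g, c • ρ g = M}
      one_mem' := ⟨1, one_ne_zero, 1, by rw [map_one, one_smul]⟩
      mul_mem' := by
        rintro _ _ ⟨c, hc, g, rfl⟩ ⟨d, hd, h, rfl⟩
        exact ⟨c * d, mul_ne_zero hc hd, g * h, by rw [map_mul, smul_mul_smul_comm]⟩ }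

variable {ρ : Γ →* Matrix ι ι L} {X Z : Matrix ι ι L}

theorem mem_projectiveClosure_of_tendsto {c : ℕ → L} {g : ℕ → Γ} (hc : ∀ k, c k ≠ 0)
    (h : Tendsto (fun k => c k • ρ (g k)) atTop (𝓝 Z)) : Z ∈ projectiveClosure ρ :=
  mem_closure_of_tendsto h (.of_forall fun k => ⟨c k, hc k, g k, rfl⟩)

theorem exists_tendsto_of_mem_projectiveClosure (hZ : Z ∈ projectiveClosure ρ) :
    ∃ (c : ℕ → L) (g : ℕ → Γ), (∀ k, c k ≠ 0) ∧
      Tendsto (fun k => c k • ρ (g k)) atTop (𝓝 Z) := by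
  have : FirstCountableTopology (Matrix ι ι L) :=
    inferInstanceAs (FirstCountableTopology (ι → ι → L))
  obtain ⟨u, hu, hlim⟩ := mem_closure_iff_seq_limit.1 hZ
  choose c hc g hg using hu
  exact ⟨c, g, hc, hlim.congr fun k => (hg k).symm⟩

theorem map_mem_projectiveClosure (ρ : Γ →* Matrix ι ι L) (g : Γ) : ρ g ∈ projectiveClosure ρ :=
  subset_closure ⟨1, one_ne_zero, g, one_smul L _⟩

/-- `Z` has the least rank among the nonzero singular limits of scalar multiples of the operators
`ρ g`. -/
def IsMinimalSingular (ρ : Γ →* Matrix ι ι L) (Z : Matrix ι ι L) : Prop :=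
  MinimalFor (fun Z => Z ∈ projectiveClosure ρ ∧ Z ≠ 0 ∧ Z.det = 0) Matrix.rank Z

theorem IsMinimalSingular.mul_left (hZ : IsMinimalSingular ρ Z) (hX : X ∈ projectiveClosure ρ)
    (hXZ : X * Z ≠ 0) : IsMinimalSingular ρ (X * Z) :=
  have ⟨⟨hZmem, _, hZdet⟩, hZmin⟩ := hZ
  ⟨⟨mul_mem hX hZmem, hXZ, by rw [det_mul, hZdet, mul_zero]⟩, fun Y hY hle =>
    (rank_mul_le_right X Z).trans (hZmin hY (hle.trans (rank_mul_le_right X Z)))⟩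

theorem IsMinimalSingular.mul_right (hZ : IsMinimalSingular ρ Z) (hX : X ∈ projectiveClosure ρ)
    (hZX : Z * X ≠ 0) : IsMinimalSingular ρ (Z * X) :=
  have ⟨⟨hZmem, _, hZdet⟩, hZmin⟩ := hZ
  ⟨⟨mul_mem hZmem hX, hZX, by rw [det_mul, hZdet, zero_mul]⟩, fun Y hY hle =>
    (rank_mul_le_left Z X).trans (hZmin hY (hle.trans (rank_mul_le_left Z X)))⟩

theorem IsMinimalSingular.rank_le_rank_mul (hZ : IsMinimalSingular ρ Z)
    (hX : X ∈ projectiveClosure ρ) (hXZ : X * Z ≠ 0) : Z.rank ≤ (X * Z).rank :=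
  hZ.2 (hZ.mul_left hX hXZ).1 (rank_mul_le_right X Z)

theorem IsMinimalSingular.conj (hZ : IsMinimalSingular ρ Z) (h : Γ) :
    IsMinimalSingular ρ (ρ h * Z * ρ h⁻¹) := by
  have hunit (g : Γ) : IsUnit (ρ g) := (Group.isUnit g).map ρ
  have hhZ : ρ h * Z ≠ 0 := (hunit h).mul_right_eq_zero.not.2 hZ.1.2.1
  exact (hZ.mul_left (map_mem_projectiveClosure ρ h) hhZ).mul_right
    (map_mem_projectiveClosure ρ h⁻¹) ((hunit h⁻¹).mul_left_eq_zero.not.2 hhZ)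

end NormedField

variable [NontriviallyNormedField L] [ProperSpace L] {ρ : Γ →* Matrix ι ι L} {Z : Matrix ι ι L}

theorem exists_tendsto_smul_map_subseq [Nonempty ι] (ρ : Γ →* Matrix ι ι L) (g : ℕ → Γ) :
    ∃ (c : ℕ → L) (φ : ℕ → ℕ) (Z : Matrix ι ι L), (∀ k, c k ≠ 0) ∧
      (∀ k, ‖c k • ρ (g k)‖ ≤ 1) ∧ StrictMono φ ∧ Z ≠ 0 ∧
      Tendsto (fun k => c (φ k) • ρ (g (φ k))) atTop (𝓝 Z) := by
  have : ProperSpace (Matrix ι ι L) := inferInstanceAs (ProperSpace (ι → ι → L))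
  exact exists_tendsto_smul_subseq fun k => ((Group.isUnit (g k)).map ρ).ne_zero

theorem IsProjectivelyUnbounded.exists_isMinimalSingular [Nonempty ι]
    (hρ : IsProjectivelyUnbounded ρ) : ∃ Z, IsMinimalSingular ρ Z := by
  refine exists_minimalFor_of_wellFoundedLT _ _ ?_
  choose g hg using fun k : ℕ => hρ k
  obtain ⟨c, φ, Z, hc, hnorm, hφ, hZ, hlim⟩ := exists_tendsto_smul_map_subseq ρ g
  refine ⟨Z, mem_projectiveClosure_of_tendsto (fun k => hc (φ k)) hlim, hZ, ?_⟩
  have hdet (k : ℕ) : k * ‖(c k • ρ (g k)).det‖ ≤ 1 :=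
    calc k * ‖(c k • ρ (g k)).det‖ = ‖c k‖ ^ Fintype.card ι * (k * ‖(ρ (g k)).det‖) := by
          rw [det_smul, norm_mul, norm_pow]
          ring
      _ ≤ ‖c k‖ ^ Fintype.card ι * ‖ρ (g k)‖ ^ Fintype.card ι := by
          gcongr
          exact (hg k).le
      _ = ‖c k • ρ (g k)‖ ^ Fintype.card ι := by rw [← mul_pow, ← norm_smul]
      _ ≤ 1 := pow_le_one₀ (norm_nonneg _) (hnorm k)
  have hdet_lim : Tendsto (fun k => (c k • ρ (g k)).det) atTop (𝓝 0) := by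
    refine squeeze_zero_norm' ?_ tendsto_one_div_atTop_nhds_zero_nat
    filter_upwards [eventually_gt_atTop 0] with k hk
    rw [le_div_iff₀ (by positivity), mul_comm]
    exact hdet k
  exact tendsto_nhds_unique ((continuous_id.matrix_det.tendsto Z).comp hlim)
    (hdet_lim.comp hφ.tendsto_atTop)

-- The conjugates of `h` by `g k` approach `π ρ(h) σ` projectively, and simultaneously their
-- inverses approach `π ρ(h⁻¹) σ`, where `π` and `σ` are limits of `ρ (g k)` and `ρ (g k)⁻¹`.
theorem IsMinimalSingular.exists_tendsto_letter [Nonempty ι] (hZ : IsMinimalSingular ρ Z)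
    (hspan : IsStronglySpanning L ρ) :
    ∃ (y : ℕ → Γ) (e : ℕ → L) (W : Bool → Matrix ι ι L), (∀ k, e k ≠ 0) ∧
      (∀ b, Tendsto (fun k => e k • ρ (letter (y k) b)) atTop (𝓝 (W b))) ∧
      ∀ b, IsMinimalSingular ρ (W b) := by
  obtain ⟨c, g, hc, hlim⟩ := exists_tendsto_of_mem_projectiveClosure hZ.1.1
  obtain ⟨d, φ, S, hd, -, hφ, hS, hlim_inv⟩ := exists_tendsto_smul_map_subseq ρ fun k => (g k)⁻¹
  have hSmem := mem_projectiveClosure_of_tendsto (fun k => hd (φ k)) hlim_inv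
  obtain ⟨h, hh⟩ := hspan.exists_forall_mul_mul_ne_zero (κ := Unit) (A := fun _ => Z)
    (B := fun _ => S) (fun _ => hZ.1.2.1) fun _ => hS
  refine ⟨fun k => g (φ k) * h * (g (φ k))⁻¹, fun k => c (φ k) * d (φ k),
    fun b => Z * ρ (letter h b) * S, fun k => mul_ne_zero (hc _) (hd _), fun b => ?_, fun b => ?_⟩
  · refine (((hlim.comp hφ.tendsto_atTop).mul tendsto_const_nhds).mul hlim_inv).congr fun k => ?_
    simp only [Function.comp_apply, letter_conj, map_mul, smul_mul_assoc, mul_smul_comm, smul_smul,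
      mul_comm]
  · have hne : Z * ρ (letter h b) * S ≠ 0 := by
      cases b
      · exact (hh ()).2
      · exact (hh ()).1
    simp only [mul_assoc] at hne ⊢
    exact hZ.mul_right (mul_mem (map_mem_projectiveClosure ρ _) hSmem) hne

theorem IsMinimalSingular.exists_tendsto_letter_sq_ne_zero [Nonempty ι]
    (hZ : IsMinimalSingular ρ Z) (hspan : IsStronglySpanning L ρ) :
    ∃ (y : ℕ → Γ) (e : ℕ → L) (W : Bool → Matrix ι ι L), (∀ k, e k ≠ 0) ∧
      (∀ b, Tendsto (fun k => e k • ρ (letter (y k) b)) atTop (𝓝 (W b))) ∧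
      ∀ b, IsMinimalSingular ρ (W b) ∧ W b * W b ≠ 0 := by
  have hunit (g : Γ) : IsUnit (ρ g) := (Group.isUnit g).map ρ
  have hmem := map_mem_projectiveClosure ρ
  obtain ⟨y, e, W, he, hlim, hW⟩ := hZ.exists_tendsto_letter hspan
  obtain ⟨q, hq⟩ := hspan.exists_forall_mul_mul_ne_zero (fun b => (hW b).1.2.1)
    fun b => (hW b).1.2.1
  refine ⟨fun k => y k * q, e, fun b => bif b then W true * ρ q else ρ q⁻¹ * W false, he, ?_, ?_⟩
  · rintro (_ | _)
    · refine (tendsto_const_nhds.mul (hlim false)).congr fun k => ?_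
      simp [letter]
    · refine ((hlim true).mul tendsto_const_nhds).congr fun k => ?_
      simp [letter]
  · rintro (_ | _)
    · have hsq : ρ q⁻¹ * W false * (ρ q⁻¹ * W false) ≠ 0 := by
        rw [mul_assoc, ← mul_assoc (W false), Ne, (hunit _).mul_right_eq_zero]
        exact (hq false).2
      exact ⟨(hW false).mul_left (hmem _) (left_ne_zero_of_mul hsq), hsq⟩
    · have hsq : W true * ρ q * (W true * ρ q) ≠ 0 := by
        rw [← mul_assoc, Ne, (hunit _).mul_left_eq_zero]
        exact (hq true).1
      exact ⟨(hW true).mul_right (hmem _) (left_ne_zero_of_mul hsq), hsq⟩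

theorem IsStronglySpanning.containsFree [Nonempty ι] (hspan : IsStronglySpanning L ρ)
    (hunb : IsProjectivelyUnbounded ρ) : ContainsFree Γ := by
  obtain ⟨Z, hZ⟩ := hunb.exists_isMinimalSingular
  obtain ⟨y, e, W, he, hlim, hW⟩ := hZ.exists_tendsto_letter_sq_ne_zero hspan
  obtain ⟨k, hk⟩ := hspan.exists_forall_mul_mul_ne_zero (κ := Bool × Bool)
    (A := fun s => W s.1) (B := fun s => W s.2) (fun s => (hW _).1.1.2.1) fun s => (hW _).1.1.2.1
  let h : Fin 2 → Γ := ![1, k]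
  have hunit (g : Γ) : IsUnit (ρ g) := (Group.isUnit g).map ρ
  let T (s : Fin 2 × Bool) : Matrix ι ι L := ρ (h s.1) * W s.2 * ρ (h s.1)⁻¹
  have hT (s) : IsMinimalSingular ρ (T s) := (hW s.2).1.conj _
  have hmul (s t : Fin 2 × Bool) (hst : s.1 = t.1 → s.2 = t.2) : T s * T t ≠ 0 := by
    have hgeneral : W s.2 * ρ ((h s.1)⁻¹ * h t.1) * W t.2 ≠ 0 := by
      obtain ⟨i, b⟩ := s
      obtain ⟨j, b'⟩ := t
      fin_cases i <;> fin_cases j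
      · obtain rfl : b = b' := hst rfl
        simpa [h] using (hW b).2
      · simpa [h] using (hk (b, b')).1
      · simpa [h] using (hk (b, b')).2
      · obtain rfl : b = b' := hst rfl
        simpa [h] using (hW b).2
    have hassoc : T s * T t =
        ρ (h s.1) * (W s.2 * ρ ((h s.1)⁻¹ * h t.1) * W t.2) * ρ (h t.1)⁻¹ := by
      simp only [T, map_mul, mul_assoc]
    rwa [hassoc, Ne, (hunit _).mul_left_eq_zero, (hunit _).mul_right_eq_zero]
  refine containsFree_of_tendsto (ρ := ρ) (z := fun i k => h i * y k * (h i)⁻¹) (fun _ => he)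
    (fun s => ?_) (fun s => (hT s).1.2.1) (fun s => (hT s).1.2.2)
    fun s t hst => (hT t).rank_le_rank_mul (hT s).1.1 (hmul s t hst)
  refine ((tendsto_const_nhds.mul (hlim s.2)).mul tendsto_const_nhds).congr fun k => ?_
  simp only [letter_conj, map_mul, mul_smul_comm, smul_mul_assoc]

end Representation

end ProximalLimits

/-! ### Absolutely irreducible representations with finitely many traces -/

section FiniteTraces

open Matrix
open scoped MonoidAlgebra commutatorElement

theorem span_range_eq_top_of_isIrreducible {K Γ V : Type*} [Field K] [IsAlgClosed K] [Monoid Γ]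
    [AddCommGroup V] [Module K V] [FiniteDimensional K V] (ρ : Representation K Γ V)
    [ρ.IsIrreducible] : Submodule.span K (Set.range ρ) = ⊤ := by
  classical
  refine eq_top_iff.2 fun f _ => ?_
  have hschur := (IsSimpleModule.algebraMap_end_bijective_of_isAlgClosed (A := K[Γ])
    (V := ρ.asModule) K).2
  let f' : Module.End (Module.End K[Γ] ρ.asModule) ρ.asModule :=
    { toFun := f
      map_add' := f.map_add
      map_smul' := fun m v => by
        obtain ⟨c, rfl⟩ := hschur m
        exact f.map_smul c v }
  let b := Module.finBasis K ρ.asModule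
  obtain ⟨r, hr⟩ := jacobson_density f' (Finset.univ.image b)
  have hf : f = ρ.asAlgebraHom r :=
    b.ext fun i => hr _ (Finset.mem_image_of_mem b (Finset.mem_univ i))
  rw [hf, Representation.asAlgebraHom_def, MonoidAlgebra.lift_apply]
  exact Submodule.sum_mem _ fun g _ => Submodule.smul_mem _ _ (Submodule.subset_span ⟨g, rfl⟩)

section Trace

variable {Γ ι K : Type*} [Group Γ] [Fintype ι] [Field K]

theorem eq_of_forall_trace_mul_eq {s : Set (Matrix ι ι K)} (hs : Submodule.span K s = ⊤)
    {M N : Matrix ι ι K} (h : ∀ X ∈ s, (X * M).trace = (X * N).trace) : M = N := by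
  classical
  have heq : traceLinearMap ι K K ∘ₗ LinearMap.mulRight K M =
      traceLinearMap ι K K ∘ₗ LinearMap.mulRight K N := LinearMap.ext_on hs h
  exact ext_iff_trace_mul_left.2 (LinearMap.congr_fun heq)

variable [DecidableEq ι]

/-- `tr (ρ g) ^ n / det (ρ g)`, which depends only on the image of `ρ g` in `PGL`. Writing the
denominator as `det (ρ g⁻¹)` keeps the value in the ring generated by the matrix entries. -/
def projectiveTrace (ρ : Γ →* Matrix ι ι K) (g : Γ) : K :=
  (ρ g).trace ^ Fintype.card ι * (ρ g⁻¹).det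

variable {ρ : Γ →* Matrix ι ι K}

theorem det_map_inv (ρ : Γ →* Matrix ι ι K) (g : Γ) : (ρ g⁻¹).det = (ρ g).det⁻¹ :=
  eq_inv_of_mul_eq_one_left (by rw [← det_mul, ← map_mul, inv_mul_cancel, map_one, det_one])

theorem det_map_ne_zero (ρ : Γ →* Matrix ι ι K) (g : Γ) : (ρ g).det ≠ 0 :=
  ((isUnit_iff_isUnit_det _).1 ((Group.isUnit g).map ρ)).ne_zero

theorem finite_setOf_pow_mem {n : ℕ} (hn : 0 < n) {T : Set K} (hT : T.Finite) :
    {x : K | x ^ n ∈ T}.Finite := by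
  refine hT.preimage' fun t _ => ?_
  refine (Polynomial.nthRoots n t).finite_toSet.subset fun x hx => ?_
  exact (Polynomial.mem_nthRoots hn).2 hx

variable [Nonempty ι]

theorem finite_range_inv_smul (hspan : Submodule.span K (Set.range ρ) = ⊤)
    (hfin : (Set.range (projectiveTrace ρ)).Finite) {δ : Γ → K}
    (hδ : ∀ g, δ g ^ Fintype.card ι = (ρ g).det) :
    (Set.range fun g => (δ g)⁻¹ • ρ g).Finite := by
  obtain ⟨s, hs, hs_span⟩ := Submodule.fg_span_iff_fg_span_finset_subset _ |>.1
    (hspan ▸ Module.Finite.fg_top : (Submodule.span K (Set.range ρ)).FG)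
  rw [hspan] at hs_span
  let traces (M : Matrix ι ι K) (X : s) : K := (X * M).trace
  have htraces : Function.Injective traces := fun M N hMN =>
    eq_of_forall_trace_mul_eq hs_span.symm fun X hX => congrFun hMN ⟨X, hX⟩
  refine Set.Finite.of_finite_image (f := traces) ?_ htraces.injOn
  refine (Set.Finite.pi' fun X : s => finite_setOf_pow_mem (Fintype.card_pos (α := ι))
    (hfin.image fun t => t * X.1.det)).subset ?_
  rintro _ ⟨_, ⟨g, rfl⟩, rfl⟩ X
  obtain ⟨h, hX⟩ := hs X.2
  refine ⟨projectiveTrace ρ (h * g), ⟨h * g, rfl⟩, ?_⟩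
  have hh := det_map_ne_zero ρ h
  simp only [projectiveTrace, traces, ← hX, det_map_inv, mul_smul_comm, trace_smul, smul_eq_mul,
    mul_pow, inv_pow, hδ, map_mul, det_mul]
  field_simp

theorem hasIdentityMod_ker_of_finite_range_projectiveTrace [IsAlgClosed K]
    (hspan : Submodule.span K (Set.range ρ) = ⊤)
    (hfin : (Set.range (projectiveTrace ρ)).Finite) : HasIdentityMod ρ.ker := by
  choose δ hδ using fun g => IsAlgClosed.exists_pow_nat_eq (ρ g).det (Fintype.card_pos (α := ι))
  have hδ_ne (g) : δ g ≠ 0 := fun h =>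
    det_map_ne_zero ρ g (by rw [← hδ, h, zero_pow Fintype.card_ne_zero])
  let S := (Subgroup.center (Matrix ι ι K)ˣ).comap ρ.toHomUnits
  have hS (a b : Γ) (hab : (δ a)⁻¹ • ρ a = (δ b)⁻¹ • ρ b) : a⁻¹ * b ∈ S := by
    have hb : ρ b = (δ b * (δ a)⁻¹) • ρ a := by
      rw [mul_smul, hab, smul_inv_smul₀ (hδ_ne b)]
    have hscalar : ρ (a⁻¹ * b) = (δ b * (δ a)⁻¹) • 1 := by
      rw [map_mul, hb, mul_smul_comm, ← map_mul, inv_mul_cancel, map_one]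
    refine Subgroup.mem_center_iff.2 fun u => Units.ext ?_
    change (u : Matrix ι ι K) * ρ (a⁻¹ * b) = ρ (a⁻¹ * b) * u
    rw [hscalar, mul_smul_comm, smul_mul_assoc, mul_one, one_mul]
  have : Finite (Γ ⧸ S) := by
    have := (finite_range_inv_smul hspan hfin hδ).to_subtype
    refine Finite.of_injective (fun q : Γ ⧸ S => Set.rangeFactorization
      (fun g => (δ g)⁻¹ • ρ g) q.out) fun q q' h => ?_
    rw [← q.out_eq, ← q'.out_eq]
    exact QuotientGroup.eq.2 (hS _ _ (congrArg Subtype.val h))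
  have : S.FiniteIndex := Subgroup.finiteIndex_of_finite_quotient
  refine ((HasIdentityMod.of_finiteIndex S).commutator (.of_finiteIndex S)).mono ?_
  refine Subgroup.commutator_le.2 fun a ha b _ => ?_
  have hone : ρ.toHomUnits ⁅a, b⁆ = 1 := by
    rw [map_commutatorElement, commutatorElement_eq_one_iff_mul_comm]
    exact (Subgroup.mem_center_iff.1 ha _).symm
  exact congrArg Units.val hone

end Trace

end FiniteTraces

/-! ### Eigenvalues and change of base field -/

section EigenvalueBaseChange

open Matrix Module.End

section Eigenvalue

attribute [local instance] Matrix.normedAddCommGroup Matrix.normedSpace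

variable {Γ ι C : Type*} [Group Γ] [Fintype ι] [DecidableEq ι] [NormedField C]

theorem hasEigenvalue_of_mem_roots_charpoly {K : Type*} [Field K] {A : Matrix ι ι K} {l : K}
    (hl : l ∈ A.charpoly.roots) : HasEigenvalue (toLin' A) l := by
  rw [hasEigenvalue_iff_isRoot_charpoly, Matrix.charpoly_toLin']
  exact Polynomial.isRoot_of_mem_roots hl

theorem card_roots_charpoly {K : Type*} [Field K] [IsAlgClosed K] (A : Matrix ι ι K) :
    A.charpoly.roots.card = Fintype.card ι := by
  rw [IsAlgClosed.card_roots_eq_natDegree, charpoly_natDegree_eq_dim]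

theorem exists_hasEigenvalue_norm_trace_le [IsAlgClosed C] [Nonempty ι] (A : Matrix ι ι C) :
    ∃ l, HasEigenvalue (toLin' A) l ∧ ‖A.trace‖ ≤ Fintype.card ι * ‖l‖ := by
  classical
  have hne : A.charpoly.roots.toFinset.Nonempty := by
    rw [Multiset.toFinset_nonempty, ← Multiset.card_pos, card_roots_charpoly]
    exact Fintype.card_pos
  obtain ⟨l, hl, hmax⟩ := Finset.exists_max_image _ norm hne
  simp only [Multiset.mem_toFinset] at hl hmax
  refine ⟨l, hasEigenvalue_of_mem_roots_charpoly hl, ?_⟩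
  calc ‖A.trace‖ = ‖A.charpoly.roots.sum‖ := by rw [trace_eq_sum_roots_charpoly]
    _ ≤ (A.charpoly.roots.map norm).sum := norm_multiset_sum_le _
    _ ≤ (A.charpoly.roots.map norm).card • ‖l‖ :=
      Multiset.sum_le_card_nsmul _ _ (Multiset.forall_mem_map_iff.2 hmax)
    _ = Fintype.card ι * ‖l‖ := by rw [Multiset.card_map, card_roots_charpoly, nsmul_eq_mul]

theorem exists_hasEigenvalue_norm_trace_le_of_isUltrametricDist [IsUltrametricDist C]
    [IsAlgClosed C] [Nonempty ι] (A : Matrix ι ι C) :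
    ∃ l, HasEigenvalue (toLin' A) l ∧ ‖A.trace‖ ≤ ‖l‖ := by
  have hne : A.charpoly.roots ≠ 0 := by
    rw [← Multiset.card_pos, card_roots_charpoly]
    exact Fintype.card_pos
  obtain ⟨l, hl, hle⟩ :=
    IsUltrametricDist.exists_norm_multiset_sum_le A.charpoly.roots (f := id)
  rw [Multiset.map_id, ← trace_eq_sum_roots_charpoly] at hle
  exact ⟨l, hasEigenvalue_of_mem_roots_charpoly (hl hne), hle⟩

variable {ρ : Γ →* Matrix ι ι C} {g : Γ}

theorem IsProjectivelyUnbounded.of_hasEigenvalue {l : C} (hl : HasEigenvalue (toLin' (ρ g)) l)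
    (hlt : ‖(ρ g).det‖ < ‖l‖ ^ Fintype.card ι) : IsProjectivelyUnbounded ρ := by
  intro B
  set n := Fintype.card ι
  obtain ⟨v, hv⟩ := hl.exists_hasEigenvector
  have hnorm (k : ℕ) : ‖l‖ ^ k ≤ n * ‖ρ (g ^ k)‖ := by
    refine le_of_mul_le_mul_right ?_ (norm_pos_iff.2 hv.2)
    have hpow : ρ (g ^ k) *ᵥ v = l ^ k • v := by
      rw [← hv.pow_apply k, ← toLin'_pow, toLin'_apply, map_pow]
    calc ‖l‖ ^ k * ‖v‖ = ‖ρ (g ^ k) *ᵥ v‖ := by rw [hpow, norm_smul, norm_pow]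
      _ ≤ n * ‖ρ (g ^ k)‖ * ‖v‖ := norm_mulVec_le _ _
  have hdet : 0 < ‖(ρ g).det‖ := norm_pos_iff.2 (det_map_ne_zero ρ g)
  obtain ⟨k, hk⟩ := pow_unbounded_of_one_lt ((n : ℝ) ^ n * B) ((one_lt_div hdet).2 hlt)
  rw [div_pow, lt_div_iff₀ (pow_pos hdet k)] at hk
  refine ⟨g ^ k, lt_of_mul_lt_mul_left (a := (n : ℝ) ^ n) ?_ (by positivity)⟩
  calc (n : ℝ) ^ n * (B * ‖(ρ (g ^ k)).det‖) = n ^ n * B * ‖(ρ g).det‖ ^ k := by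
        rw [map_pow, det_pow, norm_pow, mul_assoc]
    _ < (‖l‖ ^ n) ^ k := hk
    _ = (‖l‖ ^ k) ^ n := pow_right_comm _ _ _
    _ ≤ (n * ‖ρ (g ^ k)‖) ^ n := by gcongr; exact hnorm k
    _ = n ^ n * ‖ρ (g ^ k)‖ ^ n := mul_pow _ _ _

theorem norm_projectiveTrace_mul_norm_det (ρ : Γ →* Matrix ι ι C) (g : Γ) :
    ‖projectiveTrace ρ g‖ * ‖(ρ g).det‖ = ‖(ρ g).trace‖ ^ Fintype.card ι := by
  rw [← norm_mul, ← norm_pow, projectiveTrace, det_map_inv,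
    inv_mul_cancel_right₀ (det_map_ne_zero ρ g)]

theorem IsProjectivelyUnbounded.of_projectiveTrace [IsAlgClosed C] [Nonempty ι]
    (h : (Fintype.card ι : ℝ) ^ Fintype.card ι < ‖projectiveTrace ρ g‖ ∨
      IsUltrametricDist C ∧ 1 < ‖projectiveTrace ρ g‖) : IsProjectivelyUnbounded ρ := by
  have hdet : 0 < ‖(ρ g).det‖ := norm_pos_iff.2 (det_map_ne_zero ρ g)
  rcases h with hlarge | ⟨_, hlarge⟩
  · obtain ⟨l, hl, htrace⟩ := exists_hasEigenvalue_norm_trace_le (ρ g)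
    refine .of_hasEigenvalue hl (lt_of_mul_lt_mul_left ?_
      (show (0 : ℝ) ≤ (Fintype.card ι : ℝ) ^ Fintype.card ι by positivity))
    calc (Fintype.card ι : ℝ) ^ Fintype.card ι * ‖(ρ g).det‖
        < ‖projectiveTrace ρ g‖ * ‖(ρ g).det‖ := by gcongr
      _ = ‖(ρ g).trace‖ ^ Fintype.card ι := norm_projectiveTrace_mul_norm_det ρ g
      _ ≤ (Fintype.card ι * ‖l‖) ^ Fintype.card ι := by gcongr
      _ = _ := mul_pow _ _ _
  · obtain ⟨l, hl, htrace⟩ := exists_hasEigenvalue_norm_trace_le_of_isUltrametricDist (ρ g)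
    refine .of_hasEigenvalue hl ?_
    calc ‖(ρ g).det‖ < ‖projectiveTrace ρ g‖ * ‖(ρ g).det‖ := lt_mul_of_one_lt_left hdet hlarge
      _ = ‖(ρ g).trace‖ ^ Fintype.card ι := norm_projectiveTrace_mul_norm_det ρ g
      _ ≤ ‖l‖ ^ Fintype.card ι := by gcongr

end Eigenvalue

section BaseChange

variable {Γ ι K L : Type*} [Group Γ] [Fintype ι] [DecidableEq ι] [Field K] [Field L]

theorem span_image_mapMatrix_eq_top (f : K →+* L) {s : Set (Matrix ι ι K)}
    (h : Submodule.span K s = ⊤) : Submodule.span L (f.mapMatrix '' s) = ⊤ := by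
  have hmem (M : Matrix ι ι K) : f.mapMatrix M ∈ Submodule.span L (f.mapMatrix '' s) := by
    have hM : M ∈ Submodule.span K s := h ▸ Submodule.mem_top
    induction hM using Submodule.span_induction with
    | mem M hM => exact Submodule.subset_span (Set.mem_image_of_mem _ hM)
    | zero => simp only [map_zero, Submodule.zero_mem]
    | add M N _ _ hM hN => simpa only [map_add] using Submodule.add_mem _ hM hN
    | smul c M _ hM =>
      have hsmul : f.mapMatrix (c • M) = f c • f.mapMatrix M := by ext; simp
      exact hsmul ▸ Submodule.smul_mem _ _ hM
  refine eq_top_iff.2 fun M _ => ?_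
  rw [matrix_eq_sum_single M]
  refine Submodule.sum_mem _ fun i _ => Submodule.sum_mem _ fun j _ => ?_
  have hsingle : single i j (M i j) = M i j • f.mapMatrix (single i j 1) := by
    simp [smul_single]
  exact hsingle ▸ Submodule.smul_mem _ _ (hmem _)

theorem span_eq_top_of_span_image_mapMatrix (f : K →+* L) {s : Set (Matrix ι ι K)}
    (h : Submodule.span L (f.mapMatrix '' s) = ⊤) : Submodule.span K s = ⊤ := by
  by_contra hne
  obtain ⟨φ, hφ, hle⟩ := Submodule.exists_le_ker_of_lt_top _ (lt_top_iff_ne_top.2 hne)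
  let ψ : Matrix ι ι L →ₗ[L] L := (stdBasis L ι ι).constr L fun q => f (φ (single q.1 q.2 1))
  have hψ (M : Matrix ι ι K) : ψ (f.mapMatrix M) = f (φ M) := by
    have hM : M = ∑ i, ∑ j, M i j • single i j 1 := by
      simpa [smul_single] using matrix_eq_sum_single M
    conv_rhs => rw [hM]
    simp only [ψ, Module.Basis.constr_apply_fintype, Fintype.sum_prod_type, map_sum, map_smul,
      smul_eq_mul, map_mul]
    rfl
  have hzero : ψ = 0 := LinearMap.ext_on h (Set.forall_mem_image.2 fun M hM => by
    rw [hψ, LinearMap.mem_ker.1 (hle (Submodule.subset_span hM)), map_zero, LinearMap.zero_apply])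
  refine hφ (LinearMap.ext fun M => f.injective ?_)
  rw [← hψ, hzero, LinearMap.zero_apply, LinearMap.zero_apply, map_zero]

theorem ker_comp_eq_ker_of_injective {M N : Type*} [MulOneClass M] [MulOneClass N] (f : Γ →* M)
    (g : M →* N) (hg : Function.Injective g) : (g.comp f).ker = f.ker :=
  Subgroup.ext fun _ => map_eq_one_iff g hg

/-- The representation obtained by applying a homomorphism of fields to all matrix entries. -/
def baseChange (f : K →+* L) (ρ : Γ →* Matrix ι ι K) : Γ →* Matrix ι ι L :=
  f.mapMatrix.toMonoidHom.comp ρ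

theorem ker_baseChange (f : K →+* L) (ρ : Γ →* Matrix ι ι K) : (baseChange f ρ).ker = ρ.ker :=
  ker_comp_eq_ker_of_injective ρ _ (Matrix.map_injective f.injective)

theorem isStronglySpanning_baseChange_iff (f : K →+* L) {ρ : Γ →* Matrix ι ι K} :
    IsStronglySpanning L (baseChange f ρ) ↔ IsStronglySpanning K ρ := by
  refine forall₂_congr fun H _ => ?_
  have himage : baseChange f ρ '' H = f.mapMatrix '' (ρ '' H) := Set.image_comp f.mapMatrix ρ H
  rw [himage]
  exact ⟨span_eq_top_of_span_image_mapMatrix f, span_image_mapMatrix_eq_top f⟩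

theorem exists_baseChange_eq (f : K →+* L) {ρ : Γ →* Matrix ι ι L}
    (h : ∀ g i j, ρ g i j ∈ f.range) : ∃ ρ' : Γ →* Matrix ι ι K, baseChange f ρ' = ρ := by
  choose σ hσ using h
  have hσ' (g : Γ) : f.mapMatrix (of (σ g)) = ρ g := Matrix.ext (hσ g)
  have hinj : Function.Injective (f.mapMatrix : Matrix ι ι K → Matrix ι ι L) :=
    Matrix.map_injective f.injective
  exact ⟨{ toFun g := of (σ g)
           map_one' := hinj (by rw [hσ', map_one, map_one])
           map_mul' g h := hinj (by rw [hσ', map_mul, map_mul, hσ', hσ']) },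
    MonoidHom.ext hσ'⟩

theorem projectiveTrace_baseChange (f : K →+* L) (ρ : Γ →* Matrix ι ι K) (g : Γ) :
    projectiveTrace (baseChange f ρ) g = f (projectiveTrace ρ g) := by
  have htrace : (baseChange f ρ g).trace = f (ρ g).trace := (AddMonoidHom.map_trace f _).symm
  have hdet : (baseChange f ρ g⁻¹).det = f (ρ g⁻¹).det := (f.map_det _).symm
  rw [projectiveTrace, projectiveTrace, htrace, hdet, map_mul, map_pow]

theorem projectiveTrace_mem {ρ : Γ →* Matrix ι ι K} {A : Subring K} (h : ∀ g i j, ρ g i j ∈ A)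
    (g : Γ) : projectiveTrace ρ g ∈ A := by
  refine mul_mem (pow_mem (sum_mem fun i _ => h g i i) _) ?_
  rw [det_apply]
  exact sum_mem fun σ _ => zsmul_mem (prod_mem fun i _ => h _ _ _) _

section Norm

attribute [local instance] Matrix.normedAddCommGroup

theorem IsProjectivelyUnbounded.of_baseChange {K L : Type*} [NormedField K] [NormedField L]
    {f : K →+* L} (hf : ∀ x, ‖f x‖ = ‖x‖) {ρ : Γ →* Matrix ι ι K}
    (h : IsProjectivelyUnbounded (baseChange f ρ)) : IsProjectivelyUnbounded ρ := by
  refine fun B => (h B).imp fun g hg => ?_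
  have hdet : ‖(baseChange f ρ g).det‖ = ‖(ρ g).det‖ := by
    rw [← hf, RingHom.map_det]
    rfl
  have hnorm : ‖baseChange f ρ g‖ = ‖ρ g‖ := norm_map_eq _ f hf
  rwa [hdet, hnorm] at hg

end Norm

end BaseChange

section Place

variable {Γ ι K : Type*} [Group Γ] [Fintype ι] [DecidableEq ι] [Field K]

/-- `t` is large at some place of `K`: an embedding of `K` into an algebraic closure of a local
field sends `t` to an element of absolute value greater than `N`. At ultrametric places the bound
`1` is enough. -/
def IsLargeAtPlace (N : ℝ) (t : K) : Prop :=
  ∃ (P C : Type) (_ : NontriviallyNormedField P) (_ : ProperSpace P) (_ : NormedField C)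
    (_ : NormedAlgebra P C) (_ : Algebra.IsAlgebraic P C) (_ : IsAlgClosed C) (φ : K →+* C),
    N < ‖φ t‖ ∨ IsUltrametricDist C ∧ 1 < ‖φ t‖

theorem IsStronglySpanning.containsFree_of_isLargeAtPlace [Nonempty ι] {ρ : Γ →* Matrix ι ι K}
    (hspan : IsStronglySpanning K ρ) {S : Finset K}
    (hS : ∀ g i j, ρ g i j ∈ Subring.closure (S : Set K)) {g : Γ}
    (h : IsLargeAtPlace ((Fintype.card ι : ℝ) ^ Fintype.card ι) (projectiveTrace ρ g)) :
    ContainsFree Γ := by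
  classical
  obtain ⟨P, C, _, _, _, _, _, _, φ, hφ⟩ := h
  let L := IntermediateField.adjoin P (S.image φ : Set C)
  have : FiniteDimensional P L :=
    IntermediateField.finiteDimensional_adjoin fun x _ => Algebra.IsIntegral.isIntegral x
  have : ProperSpace L := FiniteDimensional.proper P L
  have hmem (g : Γ) (i j : ι) : baseChange φ ρ g i j ∈ (L.val : L →+* C).range := by
    have hle : Subring.closure (S : Set K) ≤ L.toSubfield.toSubring.comap φ :=
      Subring.closure_le.2 fun s hs =>
        IntermediateField.subset_adjoin P _ (Finset.mem_coe.2 (Finset.mem_image_of_mem φ hs))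
    exact ⟨⟨_, hle (hS g i j)⟩, rfl⟩
  obtain ⟨ρL, hρL⟩ := exists_baseChange_eq _ hmem
  have hspanL : IsStronglySpanning L ρL := by
    rwa [← isStronglySpanning_baseChange_iff (L.val : L →+* C), hρL,
      isStronglySpanning_baseChange_iff]
  refine hspanL.containsFree (.of_baseChange (f := (L.val : L →+* C)) (fun _ => rfl) ?_)
  rw [hρL]
  refine .of_projectiveTrace (g := g) ?_
  rwa [projectiveTrace_baseChange]

end Place

end EigenvalueBaseChange

/-! ### Places at which an element is large -/

section LargePlaces

open Polynomial

section Extension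

variable {A k K C : Type*} [CommRing A] [Field k] [Field K] [Countable K] [Field C] [IsAlgClosed C]
  [Uncountable C]

open Cardinal in
theorem infinite_of_isTranscendenceBasis [Countable A] [Nontrivial A] [Algebra A C] {t : Set C}
    (ht : IsTranscendenceBasis A ((↑) : t → C)) : Infinite t := by
  have hcard := IsAlgClosed.cardinal_eq_cardinal_transcendence_basis_of_aleph0_lt _ ht
    mk_le_aleph0 aleph0_lt_mk
  have hlt : ℵ₀ < #C := aleph0_lt_mk
  rw [lift_id, lift_id] at hcard
  exact infinite_iff.2 (hcard ▸ hlt.le)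

theorem exists_ringHom_comp_algebraMap_eq [Algebra A K] [FaithfulSMul A K] {f : A →+* C}
    (hf : Function.Injective f) : ∃ φ : K →+* C, φ.comp (algebraMap A K) = f := by
  let _ : Algebra A C := f.toAlgebra
  have : FaithfulSMul A C := (faithfulSMul_iff_algebraMap_injective A C).2 hf
  have : Countable A := (FaithfulSMul.algebraMap_injective A K).countable
  have : Nontrivial A := f.domain_nontrivial
  obtain ⟨s, hs⟩ := exists_isTranscendenceBasis A K
  obtain ⟨t, ht⟩ := exists_isTranscendenceBasis A C
  have : Infinite t := infinite_of_isTranscendenceBasis ht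
  obtain ⟨e⟩ : Nonempty (s ↪ t) :=
    ⟨(nonempty_embedding_nat s).some.trans (Infinite.natEmbedding t)⟩
  let B := Algebra.adjoin A (Set.range ((↑) : s → K))
  let g : B →ₐ[A] C := (MvPolynomial.aeval fun i => (e i : C)).comp
    (hs.1.aevalEquiv.symm : B →ₐ[A] MvPolynomial s A)
  have haeval : Function.Injective (MvPolynomial.aeval (R := A) fun i => (e i : C)) :=
    ht.1.comp e e.injective
  have hg : Function.Injective g := haeval.comp hs.1.aevalEquiv.symm.injective
  let _ : Algebra B C := g.toRingHom.toAlgebra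
  have : FaithfulSMul B C := (faithfulSMul_iff_algebraMap_injective B C).2 hg
  have : Algebra.IsAlgebraic B K := hs.isAlgebraic
  let φ : K →ₐ[B] C := IsAlgClosed.lift
  exact ⟨φ, RingHom.ext fun x => (φ.commutes (algebraMap A B x)).trans (g.commutes x)⟩

theorem exists_ringHom_comp_eq {f : A →+* K} {g : A →+* C} (h : RingHom.ker f = RingHom.ker g) :
    ∃ φ : K →+* C, φ.comp f = g := by
  let Q := A ⧸ RingHom.ker f
  let _ : Algebra Q K := f.kerLift.toAlgebra
  have : FaithfulSMul Q K :=
    (faithfulSMul_iff_algebraMap_injective Q K).2 f.kerLift_injective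
  let g' : Q →+* C := Ideal.Quotient.lift (RingHom.ker f) g fun _ ha => h.le ha
  have hg' : Function.Injective g' := RingHom.lift_injective_of_ker_le_ideal _ _ h.ge
  obtain ⟨φ, hφ⟩ := exists_ringHom_comp_algebraMap_eq (K := K) hg'
  exact ⟨φ, RingHom.ext fun a => RingHom.congr_fun hφ (Ideal.Quotient.mk _ a)⟩

variable [Algebra k K] [Algebra k C] {t : K} {x : C}

theorem exists_ringHom_apply_eq
    (h : RingHom.ker (aeval t : k[X] →ₐ[k] K) = RingHom.ker (aeval x : k[X] →ₐ[k] C)) :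
    ∃ φ : K →+* C, φ t = x := by
  obtain ⟨φ, hφ⟩ := exists_ringHom_comp_eq (f := (aeval t : k[X] →ₐ[k] K).toRingHom)
    (g := (aeval x : k[X] →ₐ[k] C).toRingHom) h
  exact ⟨φ, by simpa using RingHom.congr_fun hφ X⟩

theorem exists_ringHom_apply_eq_of_transcendental (ht : Transcendental k t)
    (hx : Transcendental k x) : ∃ φ : K →+* C, φ t = x :=
  exists_ringHom_apply_eq (k := k) <| by
    rw [transcendental_iff_ker_eq_bot.1 ht, transcendental_iff_ker_eq_bot.1 hx]

theorem exists_ringHom_apply_eq_of_aeval_minpoly (ht : IsIntegral k t)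
    (hx : aeval x (minpoly k t) = 0) : ∃ φ : K →+* C, φ t = x :=
  exists_ringHom_apply_eq (k := k) <| by
    rw [minpoly.ker_aeval_eq_span_minpoly, minpoly.ker_aeval_eq_span_minpoly,
      minpoly.eq_of_irreducible_of_monic (minpoly.irreducible ht) hx (minpoly.monic ht)]

end Extension

theorem uncountable_of_normedAlgebra (P C : Type*) [NontriviallyNormedField P] [CompleteSpace P]
    [Field C] [Algebra P C] : Uncountable C :=
  have : Uncountable P := Cardinal.aleph0_lt_mk_iff.1 <|
    Cardinal.aleph0_lt_continuum.trans_le (continuum_le_cardinal_of_nontriviallyNormedField P)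
  (algebraMap P C).injective.uncountable

section Laurent

open LaurentSeries Valued

variable (k : Type*) [Field k]

/-- The power series over `k` as the valuation ring of `k⸨X⸩`, which transports to the latter what
Mathlib knows about the former (a discrete valuation ring with residue field `k`). -/
noncomputable def powerSeriesEquivInteger : PowerSeries k ≃+* 𝒪[k⸨X⸩] :=
  RingEquiv.ofBijective ((HahnSeries.ofPowerSeries ℤ k).codRestrict 𝒪[k⸨X⸩]
    fun F => (val_le_one_iff_eq_coe k _).2 ⟨F, rfl⟩)
    ⟨fun _ _ h => HahnSeries.ofPowerSeries_injective (congrArg Subtype.val h), fun x =>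
      ((val_le_one_iff_eq_coe k _).1 x.2).imp fun _ hF => Subtype.ext hF⟩

instance isNontrivial_valuation_laurentSeries :
    (Valued.v : Valuation k⸨X⸩ (WithZero (Multiplicative ℤ))).IsNontrivial := by
  refine ⟨HahnSeries.single 1 1, by simp, ?_⟩
  rw [valuation_single_zpow k 1]
  decide

/-- Fixes a normalization of the `X`-adic absolute value on `k⸨X⸩`; which one is immaterial. -/
noncomputable instance rankOneLaurentSeries :
    (Valued.v : Valuation k⸨X⸩ (WithZero (Multiplicative ℤ))).RankOne :=
  (Valuation.nonempty_rankOne_iff_mulArchimedean.2 inferInstance).some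

theorem properSpace_laurentSeries [Finite k] : ProperSpace k⸨X⸩ := by
  have : IsDiscreteValuationRing 𝒪[k⸨X⸩] :=
    IsDiscreteValuationRing.RingEquivClass.isDiscreteValuationRing (powerSeriesEquivInteger k)
  have : Finite 𝓀[k⸨X⸩] := .of_equiv k
    ((PowerSeries.residueFieldOfPowerSeries (k := k)).symm.trans
      (IsLocalRing.ResidueField.mapEquiv (powerSeriesEquivInteger k))).toEquiv
  open integer in
  exact properSpace_iff_completeSpace_and_isDiscreteValuationRing_integer_and_finite_residueField.2
    ⟨inferInstance, inferInstance, inferInstance⟩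

end Laurent

theorem transcendental_of_one_lt_norm {k C : Type*} [Field k] [Finite k] [NormedField C]
    [Algebra k C] {x : C} (hx : 1 < ‖x‖) : Transcendental k x := by
  intro halg
  have : FiniteDimensional k (IntermediateField.adjoin k {x}) :=
    IntermediateField.adjoin.finiteDimensional halg.isIntegral
  have : Finite (IntermediateField.adjoin k {x}) := Module.finite_of_finite k
  refine not_injective_infinite_finite
    (fun n : ℕ => IntermediateField.AdjoinSimple.gen k x ^ n) fun m n hmn => ?_
  refine (pow_right_strictMono₀ hx).injective ?_
  simpa using congrArg (fun y : IntermediateField.adjoin k {x} => ‖(y : C)‖) hmn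

theorem isLargeAtPlace_of_ringHom_complex {K : Type*} [Field K] {t : K} {N : ℝ} (φ : K →+* ℂ)
    (h : N < ‖φ t‖) : IsLargeAtPlace N t :=
  ⟨ℂ, ℂ, inferInstance, inferInstance, inferInstance, inferInstance, inferInstance, inferInstance,
    φ, .inl h⟩

section CountableField

variable {K : Type*} [Field K] [Countable K] {t : K}

open LaurentSeries Valued in
theorem isLargeAtPlace_of_transcendental_of_finite {k : Type} [Field k] [Finite k] [Algebra k K]
    (ht : Transcendental k t) (N : ℝ) : IsLargeAtPlace N t := by
  have := properSpace_laurentSeries k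
  let C := AlgebraicClosure k⸨X⸩
  let _ : NormedField C := spectralNorm.normedField k⸨X⸩ C
  let _ : NormedAlgebra k⸨X⸩ C := spectralNorm.normedAlgebra k⸨X⸩ C
  have hultra : IsUltrametricDist C :=
    IsUltrametricDist.isUltrametricDist_of_forall_norm_add_le_max_norm
      (isNonarchimedean_spectralNorm (K := k⸨X⸩) (L := C))
  have : Uncountable C := uncountable_of_normedAlgebra k⸨X⸩ C
  let x : C := algebraMap k⸨X⸩ C (HahnSeries.single (-1) 1)
  have hx : 1 < ‖x‖ := by
    rw [norm_algebraMap', toNormedField.one_lt_norm_iff, valuation_single_zpow k (-1)]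
    decide
  obtain ⟨φ, hφ⟩ := exists_ringHom_apply_eq_of_transcendental ht
    (transcendental_of_one_lt_norm (k := k) hx)
  exact ⟨k⸨X⸩, C, inferInstance, inferInstance, inferInstance, inferInstance, inferInstance,
    inferInstance, φ, .inr ⟨hultra, hφ ▸ hx⟩⟩

theorem exists_transcendental_lt_norm (N : ℝ) : ∃ x : ℂ, Transcendental ℚ x ∧ N < ‖x‖ := by
  have huncountable : ¬ (Set.Ioi |N|).Countable := by
    rw [← Cardinal.le_aleph0_iff_set_countable, Cardinal.mk_Ioi_real, not_le]
    exact Cardinal.aleph0_lt_continuum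
  obtain ⟨x, hx, htrans⟩ := Set.not_subset.1 fun h =>
    huncountable ((Algebraic.countable ℚ ℝ).mono h)
  refine ⟨x, fun halg => htrans ?_, ?_⟩
  · exact (isAlgebraic_algebraMap_iff (A := ℂ) (algebraMap ℝ ℂ).injective).1 halg
  · rw [Complex.norm_real]
    exact (le_abs_self N).trans_lt (hx.trans_le (le_abs_self x))

theorem isLargeAtPlace_of_transcendental_rat [Algebra ℚ K] (ht : Transcendental ℚ t) (N : ℝ) :
    IsLargeAtPlace N t := by
  have : Uncountable ℂ := uncountable_of_normedAlgebra ℂ ℂ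
  obtain ⟨x, hx, hN⟩ := exists_transcendental_lt_norm N
  obtain ⟨φ, hφ⟩ := exists_ringHom_apply_eq_of_transcendental ht hx
  exact isLargeAtPlace_of_ringHom_complex φ (hφ ▸ hN)

end CountableField

section Padic

theorem norm_coeff_le_one_of_forall_isRoot {C : Type*} [NormedField C] [IsUltrametricDist C]
    [IsAlgClosed C] {f : C[X]} (hf : f.Monic) (h : ∀ x, f.IsRoot x → ‖x‖ ≤ 1) (n : ℕ) :
    ‖f.coeff n‖ ≤ 1 := by
  let O := (NormedField.valuation (K := C)).integer
  have hlifts : f ∈ lifts O.subtype := by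
    rw [(IsAlgClosed.splits f).eq_prod_roots_of_monic hf, lifts_iff_liftsRing]
    refine multiset_prod_mem _ fun g hg => ?_
    obtain ⟨a, ha, rfl⟩ := Multiset.mem_map.1 hg
    have ha' : a ∈ O := h a (isRoot_of_mem_roots ha)
    exact sub_mem ((lifts_iff_liftsRing _ _).1 (X_mem_lifts _))
      ((lifts_iff_liftsRing _ _).1 (C'_mem_lifts ⟨⟨a, ha'⟩, rfl⟩))
  obtain ⟨y, hy⟩ := (lifts_iff_coeff_lifts f).1 hlifts n
  exact hy ▸ y.2

theorem den_eq_one_of_forall_padic_norm_le_one {q : ℚ}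
    (h : ∀ (p : ℕ) [Fact p.Prime], ‖(q : ℚ_[p])‖ ≤ 1) : q.den = 1 := by
  by_contra hden
  obtain ⟨p, hp, hdvd⟩ := Nat.exists_prime_and_dvd hden
  have : Fact p.Prime := ⟨hp⟩
  exact Rat.padicValuation_le_one_iff.1
    ((Padic.norm_rat_le_one_iff_padicValuation_le_one p).1 (h p)) hdvd

theorem isIntegral_int_of_forall_padicAlgCl {K : Type*} [Field K] [Algebra ℚ K] {t : K}
    (ht : IsIntegral ℚ t) (h : ∀ (p : ℕ) [Fact p.Prime] (x : PadicAlgCl p),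
      aeval x (minpoly ℚ t) = 0 → ‖x‖ ≤ 1) : IsIntegral ℤ t := by
  have hmonic := minpoly.monic ht
  have hcoeff (n : ℕ) : ((minpoly ℚ t).coeff n).den = 1 := by
    refine den_eq_one_of_forall_padic_norm_le_one fun p _ => ?_
    have hle := norm_coeff_le_one_of_forall_isRoot (hmonic.map (algebraMap ℚ (PadicAlgCl p)))
      (fun x hx => h p x (by rwa [IsRoot, eval_map_algebraMap] at hx)) n
    rw [coeff_map] at hle
    rw [← PadicAlgCl.norm_extends]
    simpa using hle
  have hlifts : minpoly ℚ t ∈ lifts (algebraMap ℤ ℚ) := (lifts_iff_coeff_lifts _).2 fun n =>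
    ⟨_, (Rat.den_eq_one_iff _).1 (hcoeff n)⟩
  obtain ⟨q, hq, -, hqmonic⟩ := lifts_and_natDegree_eq_and_monic hlifts hmonic
  refine ⟨q, hqmonic, ?_⟩
  rw [← aeval_def, ← aeval_map_algebraMap ℚ, hq, minpoly.aeval]

theorem isLargeAtPlace_of_not_isIntegral_int {K : Type*} [Field K] [Countable K] [Algebra ℚ K]
    {t : K} (ht : IsIntegral ℚ t) (hzint : ¬ IsIntegral ℤ t) (N : ℝ) : IsLargeAtPlace N t := by
  obtain ⟨p, _, x, hx, hlarge⟩ : ∃ (p : ℕ) (_ : Fact p.Prime) (x : PadicAlgCl p),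
      aeval x (minpoly ℚ t) = 0 ∧ 1 < ‖x‖ := by
    by_contra! h
    exact hzint (isIntegral_int_of_forall_padicAlgCl ht h)
  have : Uncountable (PadicAlgCl p) := uncountable_of_normedAlgebra ℚ_[p] (PadicAlgCl p)
  obtain ⟨φ, hφ⟩ := exists_ringHom_apply_eq_of_aeval_minpoly ht hx
  exact ⟨ℚ_[p], PadicAlgCl p, inferInstance, inferInstance, inferInstance, inferInstance,
    inferInstance, inferInstance, φ, .inr ⟨inferInstance, hφ ▸ hlarge⟩⟩

end Padic

section FiniteType

theorem injOn_setOf_isAlgebraic (k : Type*) {A B : Type*} [Field k] [CommRing A] [IsDomain A]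
    [Algebra k A] [Ring B] [Nontrivial B] (π : A →+* B) : Set.InjOn π {a | IsAlgebraic k a} := by
  intro a ha b hb hab
  by_contra hne
  have hunit := (ha.isIntegral.sub hb.isIntegral).isUnit (sub_ne_zero.2 hne)
  refine not_isUnit_zero (M₀ := B) ?_
  simpa only [map_sub, hab, sub_self] using hunit.map π

theorem finite_setOf_isAlgebraic (k A : Type*) [Field k] [Finite k] [CommRing A] [IsDomain A]
    [Algebra k A] [Algebra.FiniteType k A] : {a : A | IsAlgebraic k a}.Finite := by
  obtain ⟨m, hm⟩ := Ideal.exists_maximal A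
  let _ : Field (A ⧸ m) := Ideal.Quotient.field m
  have := finite_of_finite_type_of_isJacobsonRing k (A ⧸ m)
  have : Finite (A ⧸ m) := Module.finite_of_finite k
  exact .of_injOn (Set.mapsTo_univ _ _) (injOn_setOf_isAlgebraic k (Ideal.Quotient.mk m))
    Set.finite_univ

theorem numberField_of_finiteDimensional (M : Type*) [Field M] [iM : Algebra ℚ M]
    [hfin : FiniteDimensional ℚ M] : NumberField M := by
  have : CharZero M := (RingHom.charZero_iff (algebraMap ℚ M).injective).1 inferInstance
  obtain rfl : iM = DivisionRing.toRatAlgebra := Subsingleton.elim _ _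
  exact { to_finiteDimensional := hfin }

theorem exists_ringHom_complex_lt_norm {A : Type*} [CommRing A] [IsDomain A] [Algebra ℚ A]
    [Algebra.FiniteType ℚ A] {T : Set A} (hT : T.Infinite) (hzint : ∀ t ∈ T, IsIntegral ℤ t)
    (N : ℝ) : ∃ t ∈ T, ∃ ψ : A →ₐ[ℚ] ℂ, N < ‖ψ t‖ := by
  obtain ⟨m, hm⟩ := Ideal.exists_maximal A
  let _ : Field (A ⧸ m) := Ideal.Quotient.field m
  have := finite_of_finite_type_of_isJacobsonRing ℚ (A ⧸ m)
  have : NumberField (A ⧸ m) := numberField_of_finiteDimensional _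
  have hinj : Set.InjOn (Ideal.Quotient.mk m) T := (injOn_setOf_isAlgebraic ℚ _).mono fun t ht =>
    ((hzint t ht).tower_top (A := ℚ)).isAlgebraic
  obtain ⟨_, ⟨t, ht, rfl⟩, hnotMem⟩ := (hT.image hinj).exists_notMem_finite
    (NumberField.Embeddings.finite_of_norm_le (A ⧸ m) ℂ N)
  have htint : IsIntegral ℤ (Ideal.Quotient.mk m t) :=
    map_isIntegral_int (Ideal.Quotient.mk m) (hzint t ht)
  obtain ⟨ψ, hψ⟩ : ∃ ψ : A ⧸ m →+* ℂ, N < ‖ψ (Ideal.Quotient.mk m t)‖ := by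
    by_contra! hle
    exact hnotMem ⟨htint, hle⟩
  exact ⟨t, ht, (ψ.comp (Ideal.Quotient.mk m)).toRatAlgHom, hψ⟩

end FiniteType

theorem preimage_val_adjoin_infinite (k : Type*) {K : Type*} [CommRing k] [CommRing K] [Algebra k K]
    {S T : Set K} (hT : T ⊆ Subring.closure S) (hinf : T.Infinite) :
    (((↑) : Algebra.adjoin k S → K) ⁻¹' T).Infinite := by
  refine hinf.preimage fun t ht => ?_
  rw [Subtype.range_coe]
  have hle : Subring.closure S ≤ (Algebra.adjoin k S).toSubring :=
    Subring.closure_le.2 Algebra.subset_adjoin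
  exact hle (hT ht)

section InfiniteSet

variable {K : Type*} [Field K] [Countable K] {S : Finset K} {T : Set K}

theorem exists_isLargeAtPlace_of_algebra_finite {k : Type} [Field k] [Finite k] [Algebra k K]
    (hT : T ⊆ Subring.closure (S : Set K)) (hinf : T.Infinite) (N : ℝ) :
    ∃ t ∈ T, IsLargeAtPlace N t := by
  suffices ∃ t ∈ T, Transcendental k t from
    this.imp fun t ht => ⟨ht.1, isLargeAtPlace_of_transcendental_of_finite ht.2 N⟩
  by_contra! halg
  have : Algebra.FiniteType k (Algebra.adjoin k (S : Set K)) :=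
    (Subalgebra.fg_iff_finiteType _).1 (Subalgebra.fg_adjoin_finset S)
  refine preimage_val_adjoin_infinite k hT hinf ?_
  refine (finite_setOf_isAlgebraic k _).subset fun a ha => ?_
  exact (isAlgebraic_algebraMap_iff Subtype.val_injective).1 (not_not.1 (halg a ha))

theorem exists_isLargeAtPlace_of_forall_isIntegral_int [Algebra ℚ K]
    (hT : T ⊆ Subring.closure (S : Set K)) (hinf : T.Infinite) (hzint : ∀ t ∈ T, IsIntegral ℤ t)
    (N : ℝ) : ∃ t ∈ T, IsLargeAtPlace N t := by
  have : Algebra.FiniteType ℚ (Algebra.adjoin ℚ (S : Set K)) :=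
    (Subalgebra.fg_iff_finiteType _).1 (Subalgebra.fg_adjoin_finset S)
  obtain ⟨t, ht, ψ, hψ⟩ := exists_ringHom_complex_lt_norm
    (preimage_val_adjoin_infinite ℚ hT hinf)
    (fun t ht => (isIntegral_algebraMap_iff Subtype.val_injective).1 (hzint t ht)) N
  have hroot : aeval (ψ t) (minpoly ℚ (t : K)) = 0 := by
    have : aeval t (minpoly ℚ (t : K)) = 0 :=
      (aeval_algebraMap_eq_zero_iff_of_injective Subtype.val_injective).1 (minpoly.aeval ℚ _)
    rw [aeval_algHom_apply, this, map_zero]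
  have : Uncountable ℂ := uncountable_of_normedAlgebra ℂ ℂ
  obtain ⟨φ, hφ⟩ := exists_ringHom_apply_eq_of_aeval_minpoly (hzint t ht).tower_top hroot
  exact ⟨t, ht, isLargeAtPlace_of_ringHom_complex φ (hφ ▸ hψ)⟩

theorem exists_isLargeAtPlace (hT : T ⊆ Subring.closure (S : Set K)) (hinf : T.Infinite) (N : ℝ) :
    ∃ t ∈ T, IsLargeAtPlace N t := by
  obtain ⟨p, hp⟩ := CharP.exists K
  rcases CharP.char_is_prime_or_zero K p with hprime | rfl
  · have : Fact p.Prime := ⟨hprime⟩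
    let _ : Algebra (ZMod p) K := ZMod.algebra K p
    exact exists_isLargeAtPlace_of_algebra_finite (k := ZMod p) hT hinf N
  · have : CharZero K := CharP.charP_to_charZero K
    by_cases halg : ∀ t ∈ T, IsAlgebraic ℚ t
    · by_cases hzint : ∀ t ∈ T, IsIntegral ℤ t
      · exact exists_isLargeAtPlace_of_forall_isIntegral_int hT hinf hzint N
      · push Not at hzint
        obtain ⟨t, ht, hzint⟩ := hzint
        exact ⟨t, ht, isLargeAtPlace_of_not_isIntegral_int (halg t ht).isIntegral hzint N⟩
    · push Not at halg
      obtain ⟨t, ht, htrans⟩ := halg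
      exact ⟨t, ht, isLargeAtPlace_of_transcendental_rat htrans N⟩

end InfiniteSet

end LargePlaces

/-! ### The Tits alternative -/

section Alternative

open Matrix
open scoped commutatorElement

section FiniteEntries

variable {Γ ι K : Type*} [Group Γ] [Group.FG Γ] [Fintype ι] [DecidableEq ι]

theorem exists_finset_forall_mem_closure [CommRing K] (ρ : Γ →* Matrix ι ι K) :
    ∃ S : Finset K, ∀ g i j, ρ g i j ∈ Subring.closure (S : Set K) := by
  classical
  obtain ⟨G, hG⟩ := Monoid.fg_def.1 (inferInstance : Monoid.FG Γ)
  let S : Finset K := (G ×ˢ Finset.univ).image fun x : Γ × ι × ι => ρ x.1 x.2.1 x.2.2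
  refine ⟨S, fun g => ?_⟩
  have hle : Submonoid.closure (G : Set Γ) ≤
      (Subring.closure (S : Set K)).matrix.toSubmonoid.comap ρ :=
    Submonoid.closure_le.2 fun g hg i j => Subring.subset_closure <| Finset.mem_coe.2 <|
      Finset.mem_image.2 ⟨(g, i, j), Finset.mk_mem_product hg (Finset.mem_univ _), rfl⟩
  exact hle (hG ▸ Submonoid.mem_top g)

variable [Field K] [Countable K] [IsAlgClosed K]

theorem IsStronglySpanning.containsFree_or_hasIdentityMod_ker [Nonempty ι]
    {ρ : Γ →* Matrix ι ι K} (hspan : IsStronglySpanning K ρ) :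
    ContainsFree Γ ∨ HasIdentityMod ρ.ker := by
  by_cases hfin : (Set.range (projectiveTrace ρ)).Finite
  · refine .inr (hasIdentityMod_ker_of_finite_range_projectiveTrace ?_ hfin)
    simpa only [Subgroup.coe_top, Set.image_univ] using hspan ⊤ inferInstance
  · obtain ⟨S, hS⟩ := exists_finset_forall_mem_closure ρ
    obtain ⟨_, ⟨g, rfl⟩, hg⟩ := exists_isLargeAtPlace
      (Set.range_subset_iff.2 (projectiveTrace_mem hS)) hfin (Fintype.card ι ^ Fintype.card ι)
    exact .inl (hspan.containsFree_of_isLargeAtPlace hS hg)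

end FiniteEntries

section Representation

variable {Γ K V : Type*} [Group Γ] [Field K] [AddCommGroup V] [Module K V]

theorem apply_apply_eq_of_mem_ker {ρ : Representation K Γ V} {W : Submodule K V}
    (hW : ∀ g, W ≤ W.comap (ρ g)) {a b : Γ} (ha : a ∈ (ρ.subrepresentation W hW).ker)
    (hb : b ∈ (ρ.quotient W hW).ker) (v : V) : ρ a (ρ b v) = ρ a v + ρ b v - v := by
  have hmem : ρ b v - v ∈ W := (Submodule.Quotient.eq W).1 (LinearMap.congr_fun hb (W.mkQ v))
  have hfix : ρ a (ρ b v - v) = ρ b v - v := congrArg Subtype.val (LinearMap.congr_fun ha ⟨_, hmem⟩)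
  rw [map_sub, sub_eq_iff_eq_add] at hfix
  rw [hfix]
  abel

theorem commutator_ker_le_ker (ρ : Representation K Γ V) {W : Submodule K V}
    (hW : ∀ g, W ≤ W.comap (ρ g)) :
    ⁅(ρ.subrepresentation W hW).ker ⊓ (ρ.quotient W hW).ker,
      (ρ.subrepresentation W hW).ker ⊓ (ρ.quotient W hW).ker⁆ ≤ ρ.ker := by
  refine Subgroup.commutator_le.2 fun a ha b hb => ?_
  have hcomm : ρ (a * b) = ρ (b * a) := LinearMap.ext fun v => by
    rw [map_mul, map_mul, Module.End.mul_apply, Module.End.mul_apply,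
      apply_apply_eq_of_mem_ker hW ha.1 hb.2, apply_apply_eq_of_mem_ker hW hb.1 ha.2,
      add_comm (ρ a v)]
  rw [MonoidHom.mem_ker, commutatorElement_def, mul_assoc, ← _root_.mul_inv_rev, map_mul, hcomm,
    ← map_mul, mul_inv_cancel, map_one]

theorem HasIdentityMod.ker_of_subrepresentation_of_quotient {ρ : Representation K Γ V}
    {W : Submodule K V} (hW : ∀ g, W ≤ W.comap (ρ g))
    (hsub : HasIdentityMod (ρ.subrepresentation W hW).ker)
    (hquot : HasIdentityMod (ρ.quotient W hW).ker) : HasIdentityMod ρ.ker :=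
  ((hsub.inf hquot).commutator (hsub.inf hquot)).mono (commutator_ker_le_ker ρ hW)

theorem exists_forall_le_comap_of_not_isIrreducible [Nontrivial V] {ρ : Representation K Γ V}
    (h : ¬ ρ.IsIrreducible) : ∃ W : Submodule K V, W ≠ ⊥ ∧ W ≠ ⊤ ∧ ∀ g, W ≤ W.comap (ρ g) := by
  by_contra! hW
  have : Nontrivial (Subrepresentation ρ) :=
    ⟨⊥, ⊤, fun heq => bot_ne_top (congrArg Subrepresentation.toSubmodule heq)⟩
  refine h ⟨fun W => or_iff_not_imp_left.2 fun hbot => ?_⟩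
  by_contra htop
  obtain ⟨g, hg⟩ := hW W.toSubmodule (fun h => hbot (Subrepresentation.toSubmodule_injective h))
    (fun h => htop (Subrepresentation.toSubmodule_injective h))
  exact hg (W.apply_mem_toSubmodule g)

variable [FiniteDimensional K V]

theorem isStronglySpanning_toMatrixAlgEquiv_comp [IsAlgClosed K] {ι : Type*} [Fintype ι]
    [DecidableEq ι] (b : Module.Basis ι K V) {ρ : Representation K Γ V}
    (h : ∀ H : Subgroup Γ, H.FiniteIndex → Representation.IsIrreducible (ρ.comp H.subtype)) :
    IsStronglySpanning K ((LinearMap.toMatrixAlgEquiv b).toAlgHom.toMonoidHom.comp ρ) := by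
  intro H hH
  have := h H hH
  have himage : (LinearMap.toMatrixAlgEquiv b).toAlgHom.toMonoidHom.comp ρ '' H =
      (LinearMap.toMatrixAlgEquiv b).toLinearMap '' Set.range (ρ.comp H.subtype) := by
    rw [← Set.range_comp, ← Subtype.range_coe (s := (H : Set Γ)), ← Set.range_comp]
    rfl
  rw [himage, ← Submodule.map_span, span_range_eq_top_of_isIrreducible, Submodule.map_top,
    LinearMap.range_eq_top]
  exact (LinearMap.toMatrixAlgEquiv b).surjective

variable [Group.FG Γ] [Countable K] [IsAlgClosed K]

theorem containsFree_or_hasIdentityMod_ker_of_forall_isIrreducible [Nontrivial V]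
    (ρ : Representation K Γ V)
    (h : ∀ H : Subgroup Γ, H.FiniteIndex → Representation.IsIrreducible (ρ.comp H.subtype)) :
    ContainsFree Γ ∨ HasIdentityMod ρ.ker := by
  let b := Module.finBasis K V
  have : Nonempty (Fin (Module.finrank K V)) := Fin.pos_iff_nonempty.1 Module.finrank_pos
  rw [← ker_comp_eq_ker_of_injective ρ (LinearMap.toMatrixAlgEquiv b).toAlgHom.toMonoidHom
    (LinearMap.toMatrixAlgEquiv b).injective]
  exact (isStronglySpanning_toMatrixAlgEquiv_comp b h).containsFree_or_hasIdentityMod_ker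

theorem containsFree_or_hasIdentityMod_ker (ρ : Representation K Γ V) :
    ContainsFree Γ ∨ HasIdentityMod ρ.ker := by
  induction hn : Module.finrank K V using Nat.strong_induction_on generalizing Γ V with
  | _ n ih =>
  rcases subsingleton_or_nontrivial V with _ | _
  · exact .inr ((HasIdentityMod.of_finiteIndex ⊤).mono fun _ _ => Subsingleton.elim _ _)
  by_cases h : ∀ H : Subgroup Γ, H.FiniteIndex → Representation.IsIrreducible (ρ.comp H.subtype)
  · exact containsFree_or_hasIdentityMod_ker_of_forall_isIrreducible ρ h
  push Not at h
  obtain ⟨H, hH, hred⟩ := h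
  obtain ⟨W, hbot, htop, hW⟩ := exists_forall_le_comap_of_not_isIrreducible hred
  subst hn
  have hWpos : 0 < Module.finrank K W :=
    Module.finrank_pos_iff.2 (Submodule.nontrivial_iff_ne_bot.2 hbot)
  have hlt : Module.finrank K (V ⧸ W) < Module.finrank K V := by
    have := W.finrank_quotient_add_finrank
    lia
  rcases ih _ (Submodule.finrank_lt htop)
    (Representation.subrepresentation (ρ.comp H.subtype) W hW) rfl with hfree | hsub
  · exact .inl (hfree.of_injective H.subtype_injective)
  rcases ih _ hlt (Representation.quotient (ρ.comp H.subtype) W hW) rfl with hfree | hquot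
  · exact .inl (hfree.of_injective H.subtype_injective)
  have hker : HasIdentityMod (ρ.ker.subgroupOf H) :=
    .ker_of_subrepresentation_of_quotient hW hsub hquot
  exact .inr ((HasIdentityMod.of_finiteIndex H).trans hker)

end Representation

section Descent

open Cardinal

variable {Γ F : Type*} [Group Γ] [Group.FG Γ] [Field F]

theorem countable_algebraicClosure_closure (S : Finset F) :
    Countable (AlgebraicClosure (Subfield.closure (S : Set F))) := by
  have hclosure : #(Subfield.closure (S : Set F)) ≤ ℵ₀ :=
    (Subfield.cardinalMk_closure_le_max _).trans (max_le mk_le_aleph0 le_rfl)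
  exact mk_le_aleph0_iff.1
    ((Algebra.IsAlgebraic.cardinalMk_le_max _ _).trans (max_le hclosure le_rfl))

theorem containsFree_or_hasIdentityMod_ker_matrix {ι : Type*} [Fintype ι] [DecidableEq ι]
    (ρ : Γ →* Matrix ι ι F) : ContainsFree Γ ∨ HasIdentityMod ρ.ker := by
  obtain ⟨S, hS⟩ := exists_finset_forall_mem_closure ρ
  let F₀ := Subfield.closure (S : Set F)
  let K := AlgebraicClosure F₀
  have : Countable K := countable_algebraicClosure_closure S
  have hmem (g : Γ) (i j : ι) : ρ g i j ∈ F₀.subtype.range := by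
    have hle : Subring.closure (S : Set F) ≤ F₀.toSubring :=
      Subring.closure_le.2 Subfield.subset_closure
    exact ⟨⟨_, hle (hS g i j)⟩, rfl⟩
  obtain ⟨ρ₀, rfl⟩ := exists_baseChange_eq _ hmem
  rw [ker_baseChange, ← ker_baseChange (algebraMap F₀ K),
    ← ker_comp_eq_ker_of_injective _ toLinAlgEquiv'.toAlgHom.toMonoidHom toLinAlgEquiv'.injective]
  exact containsFree_or_hasIdentityMod_ker _

theorem containsFree_or_hasIdentityMod_bot {R : Type*} [Ring R] [Algebra F R]
    [FiniteDimensional F R] {f : Γ →* R} (hf : Function.Injective f) :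
    ContainsFree Γ ∨ HasIdentityMod (⊥ : Subgroup Γ) := by
  let b := Module.finBasis F R
  let ρ := (Algebra.leftMulMatrix b).toMonoidHom.comp f
  have hker : ρ.ker = ⊥ :=
    (MonoidHom.ker_eq_bot_iff ρ).2 ((Algebra.leftMulMatrix_injective b).comp hf)
  exact hker ▸ containsFree_or_hasIdentityMod_ker_matrix ρ

end Descent

end Alternative

end TitsAlternative

/-- Let `R` be a finite-dimensional algebra over a field `F` and `N` a finitely generated
subgroup of `Rˣ`. Then `N` contains no non-cyclic free subgroup (no subgroup isomorphic to
the free group on two generators) if and only if `N` satisfies a group identity. -/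
theorem no_free_subgroup_iff_group_identity
    {F R : Type*} [Field F] [Ring R] [Algebra F R] [FiniteDimensional F R]
    (N : Subgroup Rˣ) (hfg : N.FG) :
    (¬ ∃ f : FreeGroup (Fin 2) →* N, Function.Injective f) ↔
      ∃ (m : ℕ) (w : FreeGroup (Fin m)), 1 ≤ m ∧ w ≠ 1 ∧
        ∀ c : Fin m → N, FreeGroup.lift c w = 1 := by
  constructor
  · intro hfree
    have : Group.FG N := (Group.fg_iff_subgroup_fg N).2 hfg
    have hinj : Function.Injective ((Units.coeHom R).comp N.subtype) :=
      Units.val_injective.comp N.subtype_injective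
    obtain ⟨w, hw, hwN⟩ :=
      (TitsAlternative.containsFree_or_hasIdentityMod_bot (F := F) hinj).resolve_left hfree
    exact ⟨2, w, one_le_two, hw, hwN⟩
  · rintro ⟨m, w, -, hw, hid⟩ hfree
    obtain ⟨c, hc⟩ := TitsAlternative.ContainsFree.exists_lift_ne_one hfree hw
    exact hc (hid c)
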